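/- arXiv:1606.03651 — 2 statements merged into one kernel-verified Lean document; each statement's English description precedes it below -/
import Mathlib

section
/- Let X be a real-valued random variable with unbounded distribution F and Y a nonnegative random variable with distribution G, neither degenerate at zero, and let H be the distribution of XY. Suppose (X,Y) follows a Sarmanov distribution with kernels φ₁, φ₂ and parameter θ, satisfies Assumption 2 (Ḡ(bx)=o(H̄(x)) for every b>0), and there exist constants c>0, d₁∈(0,∞) and a measurable function ψ such that ψ(y)=lim_{δ→0+} (∫_{y−δ}^{y+δ} φ₂(v) G(dv))/(G(y+δ)−G(y−δ)) for all y in the support of Y, φ₁(x)→d₁ as x→∞, and P(1+θd₁ψ(Y)≥c)=1. If F belongs to the class L(γ) for some γ≥0, then H belongs to L(γ/β_G), where β_G=sup{y:G(y)<1} and γ/β_G is understood as 0 when β_G=∞. -/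
open MeasureTheory ProbabilityTheory Filter Set Asymptotics

noncomputable section

/-- The tail (survival) function `x ↦ P(Z > x)` of a random variable `Z`. -/
def rvTail {Ω : Type*} [MeasureSpace Ω] (Z : Ω → ℝ) (x : ℝ) : ℝ :=
  (ℙ {ω | x < Z ω}).toReal

/-- The cumulative distribution function `x ↦ P(Z ≤ x)` of a random variable `Z`. -/
def rvCdf {Ω : Type*} [MeasureSpace Ω] (Z : Ω → ℝ) (x : ℝ) : ℝ :=
  (ℙ {ω | Z ω ≤ x}).toReal

/-- The left limit of the cdf, `G(y-) = P(Z < y)`. -/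
def rvCdfLeft {Ω : Type*} [MeasureSpace Ω] (Z : Ω → ℝ) (y : ℝ) : ℝ :=
  (ℙ {ω | Z ω < y}).toReal

/-- The distribution of `Z` is unbounded (above): its tail is positive for every `x > 0`. -/
def UnboundedDist {Ω : Type*} [MeasureSpace Ω] (Z : Ω → ℝ) : Prop :=
  ∀ x > 0, 0 < rvTail Z x

/-- The support `D_Z = {y : P(Z ∈ (y - δ, y + δ)) > 0 for all δ > 0}` of the
distribution of `Z`. -/
def distSupport {Ω : Type*} [MeasureSpace Ω] (Z : Ω → ℝ) : Set ℝ :=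
  {y | ∀ δ > 0, 0 < ℙ {ω | Z ω ∈ Ioo (y - δ) (y + δ)}}

/-- The distribution of `Z` belongs to the class `L(γ)`: it is unbounded above and
`P(Z > x - t) ~ e^{γ t} P(Z > x)` as `x → ∞`, for every `t > 0`. -/
def MemLGamma {Ω : Type*} [MeasureSpace Ω] (Z : Ω → ℝ) (γ : ℝ) : Prop :=
  UnboundedDist Z ∧
    ∀ t > 0, (fun x => rvTail Z (x - t)) ~[atTop] (fun x => Real.exp (γ * t) * rvTail Z x)

/-- The tail of the two-fold convolution of the distribution of `Z` with itself. -/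
def convSqTail {Ω : Type*} [MeasureSpace Ω] (Z : Ω → ℝ) (x : ℝ) : ℝ :=
  (((Measure.map Z ℙ).conv (Measure.map Z ℙ)) (Ioi x)).toReal

/-- The distribution of `Z` belongs to the class `S(γ)`: it belongs to `L(γ)`, the
exponential moment `c = ∫ e^{γ y} dV(y)` is finite, and the tail of the two-fold
convolution satisfies `V̄*²(x) ~ 2 c V̄(x)` as `x → ∞`. -/
def MemSGamma {Ω : Type*} [MeasureSpace Ω] (Z : Ω → ℝ) (γ : ℝ) : Prop :=
  MemLGamma Z γ ∧
    Integrable (fun y => Real.exp (γ * y)) (Measure.map Z ℙ) ∧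
    (fun x => convSqTail Z x) ~[atTop]
      (fun x => 2 * (∫ y, Real.exp (γ * y) ∂(Measure.map Z ℙ)) * rvTail Z x)

open Classical in
/-- `γ / β_G`, where `β_G = sup {y : G(y) < 1}` is the right endpoint of the distribution
of `Z`, with the convention that `γ / β_G = 0` when `β_G = ∞`.
(Note that `G(y) < 1 ↔ P(Z > y) > 0`.) -/
def gammaOverBeta {Ω : Type*} [MeasureSpace Ω] (Z : Ω → ℝ) (γ : ℝ) : ℝ :=
  if BddAbove {y : ℝ | 0 < rvTail Z y} then γ / sSup {y : ℝ | 0 < rvTail Z y} else 0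

/-- Assumption 2: `Ḡ(b x) = o(H̄(x))` as `x → ∞` for every constant `b > 0`, where `G` is
the distribution of `Y` and `H` is the distribution of the product `X Y`. -/
def Assumption2 {Ω : Type*} [MeasureSpace Ω] (X Y : Ω → ℝ) : Prop :=
  ∀ b > 0, (fun x => rvTail Y (b * x)) =o[atTop] fun x => rvTail (fun ω => X ω * Y ω) x

/-- Assumption 1: `K x y` is the conditional probability `P(X > x | Y = y)`, namely for
`y` in the support of `Y` it is the limit of `P(X > x | Y ∈ (y - δ, y + δ])` as `δ → 0+`,
and for `y` outside the support it is the unconditional probability `P(X > x)` (and then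
`h y = 1`); `h : [0,∞) → (0,∞)` is a measurable function such that
`P(X > x | Y = y) ~ h(y) P(X > x)` as `x → ∞`, uniformly for `y ≥ 0`. -/
def Assumption1 {Ω : Type*} [MeasureSpace Ω] (X Y : Ω → ℝ) (h : ℝ → ℝ) (K : ℝ → ℝ → ℝ) :
    Prop :=
  Measurable h ∧ (∀ y, 0 ≤ y → 0 < h y) ∧
    (∀ y, y ∉ distSupport Y → h y = 1 ∧ ∀ x, K x y = rvTail X x) ∧
    (∀ y ∈ distSupport Y, ∀ x : ℝ,
      Tendsto
        (fun δ : ℝ => (ℙ {ω | x < X ω ∧ Y ω ∈ Ioc (y - δ) (y + δ)}).toReal /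
          (ℙ {ω | Y ω ∈ Ioc (y - δ) (y + δ)}).toReal)
        (nhdsWithin 0 (Ioi 0)) (nhds (K x y))) ∧
    ∀ ε > 0, ∀ᶠ x in atTop, ∀ y, 0 ≤ y → |K x y / (h y * rvTail X x) - 1| < ε

/-- `(X, Y)` follows a Farlie–Gumbel–Morgenstern (FGM) distribution with parameter
`θ ∈ [-1, 1]`: `P(X > x, Y > y) = F̄(x) Ḡ(y) (1 + θ F(x) G(y))` for all `x` in the
support of `X` and `y` in the support of `Y`. -/
def FGM {Ω : Type*} [MeasureSpace Ω] (X Y : Ω → ℝ) (θ : ℝ) : Prop :=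
  θ ∈ Icc (-1 : ℝ) 1 ∧
    ∀ x ∈ distSupport X, ∀ y ∈ distSupport Y,
      (ℙ {ω | x < X ω ∧ y < Y ω}).toReal =
        rvTail X x * rvTail Y y * (1 + θ * rvCdf X x * rvCdf Y y)

/-- `(X, Y)` follows a bivariate Sarmanov distribution with kernels `φ₁, φ₂` and
parameter `θ`: the joint law has density `1 + θ φ₁(x) φ₂(y)` with respect to the product
of the marginal laws, where `φ₁, φ₂` are measurable, `E φ₁(X) = E φ₂(Y) = 0` and
`1 + θ φ₁(x) φ₂(y) ≥ 0`. -/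
def Sarmanov {Ω : Type*} [MeasureSpace Ω] (X Y : Ω → ℝ) (φ₁ φ₂ : ℝ → ℝ) (θ : ℝ) : Prop :=
  Measurable φ₁ ∧ Measurable φ₂ ∧
    Integrable (fun ω => φ₁ (X ω)) ℙ ∧ Integrable (fun ω => φ₂ (Y ω)) ℙ ∧
    (∫ ω, φ₁ (X ω)) = 0 ∧ (∫ ω, φ₂ (Y ω)) = 0 ∧
    (∀ x y : ℝ, 0 ≤ y → 0 ≤ 1 + θ * φ₁ x * φ₂ y) ∧
    Measure.map (fun ω => (X ω, Y ω)) ℙ =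
      ((Measure.map X ℙ).prod (Measure.map Y ℙ)).withDensity
        (fun p => ENNReal.ofReal (1 + θ * φ₁ p.1 * φ₂ p.2))

/-- The condition `ψ(y) = lim_{δ → 0+} (∫_{y-δ}^{y+δ} φ₂(v) G(dv)) / (G(y+δ) - G(y-δ))`
for all `y` in the support of `Y`. -/
def SarmanovPsi {Ω : Type*} [MeasureSpace Ω] (Y : Ω → ℝ) (φ₂ ψ : ℝ → ℝ) : Prop :=
  ∀ y ∈ distSupport Y,
    Tendsto
      (fun δ : ℝ => (∫ v in Ioc (y - δ) (y + δ), φ₂ v ∂(Measure.map Y ℙ)) /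
        (rvCdf Y (y + δ) - rvCdf Y (y - δ)))
      (nhdsWithin 0 (Ioi 0)) (nhds (ψ y))


namespace SarmanovAux

/-- `∫_{v>0} F(x/v, ∞) μ(dv)`. -/
def Hs (F μ : Measure ℝ) (x : ℝ) : ENNReal := ∫⁻ v in Ioi (0:ℝ), F (Ioi (x / v)) ∂μ

lemma Hs_le (F μ : Measure ℝ) [IsProbabilityMeasure F] (x : ℝ) : Hs F μ x ≤ μ univ := by
  unfold Hs
  calc _ ≤ ∫⁻ v in Ioi (0:ℝ), 1 ∂μ := lintegral_mono fun v => prob_le_one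
    _ ≤ _ := by simpa using measure_mono (subset_univ _)

lemma Hs_ne_top (F μ : Measure ℝ) [IsProbabilityMeasure F] [IsFiniteMeasure μ] (x : ℝ) :
    Hs F μ x ≠ ⊤ := ne_top_of_le_ne_top (measure_ne_top μ univ) (Hs_le F μ x)

lemma le_Hs (F μ : Measure ℝ) {x r : ℝ} (hx : 0 ≤ x) (hr : 0 < r) :
    F (Ioi (x * r)) * μ (Ioi (1 / r)) ≤ Hs F μ x := by
  have h0 : (0:ℝ) < 1 / r := by positivity
  calc F (Ioi (x * r)) * μ (Ioi (1 / r)) = ∫⁻ v in Ioi (1 / r), F (Ioi (x * r)) ∂μ := by simp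
    _ ≤ ∫⁻ v in Ioi (1 / r), F (Ioi (x / v)) ∂μ := by
        refine setLIntegral_mono' measurableSet_Ioi fun v hv => ?_
        refine measure_mono (Ioi_subset_Ioi ?_)
        have hv' : 1 / r < v := hv
        have hv0 : 0 < v := h0.trans hv'
        rw [div_le_iff₀ hv0, mul_assoc]
        have : 1 ≤ r * v := by
          rw [div_lt_iff₀ hr] at hv'; nlinarith
        nlinarith
    _ ≤ _ := lintegral_mono_set (Ioi_subset_Ioi h0.le)

lemma small_part (F μ : Measure ℝ) [IsProbabilityMeasure F] [IsFiniteMeasure μ] (γ κ : ℝ)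
    (hγ : 0 ≤ γ) (hκ : 0 ≤ κ)
    (hup : ∀ s > 0, ∀ q > Real.exp (γ * s), ∀ᶠ z in atTop,
      F (Ioi (z - s)) ≤ ENNReal.ofReal q * F (Ioi z))
    (hlow : ∀ s ≥ 0, ∀ q < Real.exp (γ * s), ∀ᶠ z in atTop,
      ENNReal.ofReal q * F (Ioi z) ≤ F (Ioi (z - s)))
    (hκ2 : ∀ r > κ, μ (Ioi (1 / r)) ≠ 0)
    (t : ℝ) (ht : 0 < t) (δ : ℝ) (hδ : 0 < δ) (E : ℝ) (hE : Real.exp (γ * κ * t) < E) :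
    ∃ r > κ, 0 < r ∧ Real.exp (γ * r * t) < E ∧ ∀ᶠ x in atTop,
      F (Ioi ((x - t) * r)) * μ (Ioc 0 (1 / r)) ≤ ENNReal.ofReal δ * Hs F μ x := by
  rcases hγ.eq_or_lt with h0 | hpos
  · subst h0
    have ha := hκ2 (κ + 1) (by linarith)
    set a := μ (Ioi (1 / (κ + 1))) with hadef
    have htend : Tendsto (fun n : ℕ => μ (Ioc (0:ℝ) (1 / ((n:ℝ) + 1)))) atTop (nhds 0) := by
      have := tendsto_measure_iInter_atTop (μ := μ)
        (s := fun n : ℕ => Ioc (0:ℝ) (1 / ((n:ℝ) + 1)))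
        (fun n => measurableSet_Ioc.nullMeasurableSet)
        (fun n m hnm => Ioc_subset_Ioc_right (by
          have : (n:ℝ) ≤ m := by exact_mod_cast hnm
          exact one_div_le_one_div_of_le (by positivity) (by linarith)))
        ⟨0, measure_ne_top _ _⟩
      have he : (⋂ n : ℕ, Ioc (0:ℝ) (1 / ((n:ℝ) + 1))) = ∅ := by
        ext v
        simp only [mem_iInter, mem_Ioc, mem_empty_iff_false, iff_false, not_forall]
        by_contra! hcon
        have h1 := (hcon 0).1
        obtain ⟨n, hn⟩ := exists_nat_one_div_lt h1
        exact absurd (hcon n).2 (not_le.2 hn)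
      rwa [he, measure_empty] at this
    have hb : (0:ENNReal) < ENNReal.ofReal (δ / 2) * a :=
      ENNReal.mul_pos (by simpa using hδ) ha
    obtain ⟨n, hn, hn2⟩ := ((htend.eventually (gt_mem_nhds hb)).and
      ((tendsto_natCast_atTop_atTop (R := ℝ)).eventually_ge_atTop κ)).exists
    refine ⟨n + 1, by linarith, by positivity, by simpa using hE, ?_⟩
    have hr : (0:ℝ) < (n:ℝ) + 1 := by positivity
    have h2 := hup (t * (n + 1)) (by positivity) 2 (by simp)
    have h3 : Tendsto (fun x : ℝ => x * ((n:ℝ) + 1)) atTop atTop :=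
      tendsto_id.atTop_mul_const hr
    filter_upwards [h3.eventually h2, eventually_ge_atTop 0] with x hx hx0
    have ha2 : a ≤ μ (Ioi (1 / ((n:ℝ) + 1))) := measure_mono (Ioi_subset_Ioi
      (one_div_le_one_div_of_le (by positivity) (by linarith)))
    have hx' : F (Ioi ((x - t) * ((n:ℝ) + 1))) ≤ ENNReal.ofReal 2 * F (Ioi (x * (n + 1))) := by
      rw [sub_mul]; exact hx
    calc _ ≤ (ENNReal.ofReal 2 * F (Ioi (x * (n + 1)))) * (ENNReal.ofReal (δ / 2) * a) := by
          gcongr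
      _ ≤ (ENNReal.ofReal 2 * F (Ioi (x * (n + 1)))) *
            (ENNReal.ofReal (δ / 2) * μ (Ioi (1 / ((n:ℝ) + 1)))) := by gcongr
      _ = (ENNReal.ofReal 2 * ENNReal.ofReal (δ / 2)) *
            (F (Ioi (x * (n + 1))) * μ (Ioi (1 / ((n:ℝ) + 1)))) := by ring
      _ = ENNReal.ofReal δ * (F (Ioi (x * (n + 1))) * μ (Ioi (1 / ((n:ℝ) + 1)))) := by
          rw [← ENNReal.ofReal_mul (by norm_num)]; congr 2; ring
      _ ≤ _ := by gcongr; exact le_Hs F μ hx0 hr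
  · have hcont : Continuous fun r : ℝ => Real.exp (γ * r * t) := by fun_prop
    have hev : ∀ᶠ r in nhdsWithin κ (Ioi κ), Real.exp (γ * r * t) < E :=
      nhdsWithin_le_nhds (hcont.continuousAt.eventually (gt_mem_nhds hE))
    obtain ⟨r, hrE, hrκ⟩ := (hev.and self_mem_nhdsWithin).exists
    have hrκ : κ < r := hrκ
    have hr0 : 0 < r := by linarith
    refine ⟨r, hrκ, hr0, hrE, ?_⟩
    set r' := (κ + r) / 2 with hr'
    have h1 : κ < r' := by rw [hr']; linarith
    have h2 : r' < r := by rw [hr']; linarith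
    have hr'0 : 0 < r' := by linarith
    have ha := hκ2 r' h1
    set a := μ (Ioi (1 / r')) with hadef
    have hat : a ≠ ⊤ := measure_ne_top _ _
    have ha0 : 0 < a.toReal := ENNReal.toReal_pos ha hat
    set B := μ (Ioc 0 (1 / r)) with hB
    have hBt : B ≠ ⊤ := measure_ne_top _ _
    set K := B.toReal / (δ * a.toReal) with hK
    have hK0 : 0 ≤ K := by positivity
    have hBK : B = ENNReal.ofReal δ * ENNReal.ofReal K * a := by
      rw [← ENNReal.ofReal_toReal hBt]
      nth_rewrite 1 [← ENNReal.ofReal_toReal hat]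
      rw [← ENNReal.ofReal_mul hδ.le, ← ENNReal.ofReal_mul (by positivity)]
      congr 1
      rw [hK]; field_simp
    obtain ⟨s, hs0, hs⟩ : ∃ s ≥ 0, K < Real.exp (γ * s) := by
      refine ⟨K / γ, by positivity, ?_⟩
      rw [mul_div_cancel₀ _ hpos.ne']
      linarith [Real.add_one_le_exp K]
    have h3 : Tendsto (fun x : ℝ => x * r' + s) atTop atTop :=
      tendsto_atTop_add_const_right _ _ (tendsto_id.atTop_mul_const hr'0)
    filter_upwards [h3.eventually (hlow s hs0 K hs), eventually_ge_atTop 0,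
      eventually_ge_atTop ((s + t * r) / (r - r'))] with x hx hx0 hx1
    rw [add_sub_cancel_right] at hx
    have hge : x * r' + s ≤ (x - t) * r := by
      rw [div_le_iff₀ (by linarith)] at hx1
      linarith
    have hx2 : ENNReal.ofReal K * F (Ioi ((x - t) * r)) ≤ F (Ioi (x * r')) :=
      le_trans (by gcongr) hx
    calc _ = ENNReal.ofReal δ * ((ENNReal.ofReal K * F (Ioi ((x - t) * r))) * a) := by
          rw [hBK]; ring
      _ ≤ ENNReal.ofReal δ * (F (Ioi (x * r')) * a) := by gcongr
      _ ≤ _ := by gcongr; exact le_Hs F μ hx0 hr'0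

lemma Hs_upper (F μ : Measure ℝ) [IsProbabilityMeasure F] [IsFiniteMeasure μ] (γ κ : ℝ)
    (hγ : 0 ≤ γ) (hκ : 0 ≤ κ)
    (hup : ∀ s > 0, ∀ q > Real.exp (γ * s), ∀ᶠ z in atTop,
      F (Ioi (z - s)) ≤ ENNReal.ofReal q * F (Ioi z))
    (hlow : ∀ s ≥ 0, ∀ q < Real.exp (γ * s), ∀ᶠ z in atTop,
      ENNReal.ofReal q * F (Ioi z) ≤ F (Ioi (z - s)))
    (hκ2 : ∀ r > κ, μ (Ioi (1 / r)) ≠ 0)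
    (hμ : ∀ b > 0, ∀ ε > 0, ∀ᶠ x in atTop, μ (Ioi (b * x)) ≤ ENNReal.ofReal ε * Hs F μ x)
    (t : ℝ) (ht : 0 < t) (q : ℝ) (hq : Real.exp (γ * κ * t) < q) :
    ∀ᶠ x in atTop, Hs F μ (x - t) ≤ ENNReal.ofReal q * Hs F μ x := by
  obtain ⟨q1, hq1, hq1q⟩ := exists_between hq
  have hq10 : 0 < q1 := (Real.exp_pos _).trans hq1
  set δ := (q - q1) / 2 with hδ
  have hδ0 : 0 < δ := by rw [hδ]; linarith
  obtain ⟨r, hrκ, hr0, hrE, hsm⟩ := small_part F μ γ κ hγ hκ hup hlow hκ2 t ht δ hδ0 q1 hq1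
  obtain ⟨A, hA⟩ := eventually_atTop.1 (hup (t * r) (by positivity) q1
    (by rw [show γ * (t * r) = γ * r * t by ring]; exact hrE))
  set A' := max A 1 with hA'
  have hA'0 : 0 < A' := lt_of_lt_of_le one_pos (le_max_right _ _)
  filter_upwards [hsm, hμ (1 / A') (by positivity) δ hδ0, eventually_gt_atTop t]
    with x h1 h3 hxt
  have hsub : Ioi (0:ℝ) ⊆ Ioc 0 (1 / r) ∪ (Ioc (1 / r) (x / A') ∪ Ioi (1 / A' * x)) := by
    intro v hv
    have hv : 0 < v := hv
    rcases le_or_gt v (1 / r) with h | h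
    · exact Or.inl ⟨hv, h⟩
    · rcases le_or_gt v (x / A') with h' | h'
      · exact Or.inr (Or.inl ⟨h, h'⟩)
      · refine Or.inr (Or.inr ?_)
        rw [mem_Ioi, one_div_mul_eq_div]; exact h'
  have p1 : ∫⁻ v in Ioc 0 (1 / r), F (Ioi ((x - t) / v)) ∂μ ≤
      F (Ioi ((x - t) * r)) * μ (Ioc 0 (1 / r)) := by
    rw [← setLIntegral_const]
    refine setLIntegral_mono' measurableSet_Ioc fun v hv => measure_mono (Ioi_subset_Ioi ?_)
    rw [le_div_iff₀ hv.1, mul_assoc]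
    have : r * v ≤ 1 := by
      have := hv.2
      rw [le_div_iff₀ hr0] at this; linarith
    nlinarith
  have p2 : ∫⁻ v in Ioc (1 / r) (x / A'), F (Ioi ((x - t) / v)) ∂μ ≤
      ENNReal.ofReal q1 * Hs F μ x := by
    calc _ ≤ ∫⁻ v in Ioc (1 / r) (x / A'), ENNReal.ofReal q1 * F (Ioi (x / v)) ∂μ := by
          refine setLIntegral_mono' measurableSet_Ioc fun v hv => ?_
          have hv0 : 0 < v := lt_trans (by positivity) hv.1
          have hz : A ≤ x / v := by
            refine (le_max_left A 1).trans ?_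
            have := hv.2
            rw [le_div_iff₀ hA'0] at this
            rw [le_div_iff₀ hv0]; linarith
          refine le_trans (measure_mono (Ioi_subset_Ioi ?_)) (hA _ hz)
          rw [sub_div]
          have : t / v ≤ t * r := by
            rw [div_le_iff₀ hv0, mul_assoc]
            have := hv.1
            rw [div_lt_iff₀ hr0] at this
            nlinarith
          linarith
      _ = ENNReal.ofReal q1 * ∫⁻ v in Ioc (1 / r) (x / A'), F (Ioi (x / v)) ∂μ :=
          lintegral_const_mul' _ _ ENNReal.ofReal_ne_top
      _ ≤ _ := by
          unfold Hs
          gcongr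
          exact fun v hv => lt_trans (by positivity) hv.1
  have p3 : ∫⁻ v in Ioi (1 / A' * x), F (Ioi ((x - t) / v)) ∂μ ≤ μ (Ioi (1 / A' * x)) := by
    rw [← setLIntegral_one]
    exact lintegral_mono fun v => prob_le_one
  calc Hs F μ (x - t) ≤ _ := lintegral_mono_set hsub
    _ ≤ _ := lintegral_union_le _ _ _
    _ ≤ _ := add_le_add le_rfl (lintegral_union_le _ _ _)
    _ ≤ ENNReal.ofReal δ * Hs F μ x + (ENNReal.ofReal q1 * Hs F μ x +
          ENNReal.ofReal δ * Hs F μ x) :=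
        add_le_add (p1.trans h1) (add_le_add p2 (p3.trans h3))
    _ = ENNReal.ofReal (δ + (q1 + δ)) * Hs F μ x := by
        rw [ENNReal.ofReal_add (by positivity) (by positivity),
          ENNReal.ofReal_add (by positivity) (by positivity)]; ring
    _ = _ := by congr 2; rw [hδ]; ring

lemma Hs_lower (F μ : Measure ℝ) [IsProbabilityMeasure F] [IsFiniteMeasure μ] (γ κ : ℝ)
    (hκ : 0 ≤ κ)
    (hlow : ∀ s ≥ 0, ∀ q < Real.exp (γ * s), ∀ᶠ z in atTop,
      ENNReal.ofReal q * F (Ioi z) ≤ F (Ioi (z - s)))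
    (hκ1 : ∀ᵐ v ∂μ, κ * v ≤ 1)
    (hμ : ∀ b > 0, ∀ ε > 0, ∀ᶠ x in atTop, μ (Ioi (b * x)) ≤ ENNReal.ofReal ε * Hs F μ x)
    (t : ℝ) (ht : 0 < t) (q : ℝ) (hq : q < Real.exp (γ * κ * t)) :
    ∀ᶠ x in atTop, ENNReal.ofReal q * Hs F μ x ≤ Hs F μ (x - t) := by
  rcases le_or_gt q 0 with hq0 | hq0
  · simp [ENNReal.ofReal_of_nonpos hq0]
  obtain ⟨q1, hqq1, hq1⟩ := exists_between hq
  have hq10 : 0 < q1 := hq0.trans hqq1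
  obtain ⟨A, hA⟩ := eventually_atTop.1 (hlow (t * κ) (by positivity) q1
    (by rw [show γ * (t * κ) = γ * κ * t by ring]; exact hq1))
  set A' := max A 1 with hA'
  have hA'0 : 0 < A' := lt_of_lt_of_le one_pos (le_max_right _ _)
  filter_upwards [hμ (1 / A') (by positivity) ((q1 - q) / q1)
    (div_pos (by linarith) hq10), eventually_gt_atTop t] with x h3 hxt
  have hsub : Ioi (0:ℝ) ⊆ Ioc 0 (x / A') ∪ Ioi (1 / A' * x) := by
    intro v hv
    have hv : 0 < v := hv
    rcases le_or_gt v (x / A') with h' | h'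
    · exact Or.inl ⟨hv, h'⟩
    · refine Or.inr ?_
      rw [mem_Ioi, one_div_mul_eq_div]; exact h'
  have p2 : ENNReal.ofReal q1 * ∫⁻ v in Ioc 0 (x / A'), F (Ioi (x / v)) ∂μ ≤
      Hs F μ (x - t) := by
    calc _ = ∫⁻ v in Ioc 0 (x / A'), ENNReal.ofReal q1 * F (Ioi (x / v)) ∂μ :=
          (lintegral_const_mul' _ _ ENNReal.ofReal_ne_top).symm
      _ ≤ ∫⁻ v in Ioc 0 (x / A'), F (Ioi ((x - t) / v)) ∂μ := by
          refine lintegral_mono_ae ?_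
          filter_upwards [ae_restrict_mem measurableSet_Ioc, ae_restrict_of_ae hκ1] with v hv hv1
          have hv0 : 0 < v := hv.1
          have hz : A ≤ x / v := by
            refine (le_max_left A 1).trans ?_
            have := hv.2
            rw [le_div_iff₀ hA'0] at this
            rw [le_div_iff₀ hv0]; linarith
          refine le_trans (hA _ hz) (measure_mono (Ioi_subset_Ioi ?_))
          rw [sub_div]
          have : t * κ ≤ t / v := by
            rw [le_div_iff₀ hv0, mul_assoc]
            nlinarith
          linarith
      _ ≤ _ := lintegral_mono_set Ioc_subset_Ioi_self
  have p3 : ∫⁻ v in Ioi (1 / A' * x), F (Ioi (x / v)) ∂μ ≤ μ (Ioi (1 / A' * x)) := by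
    rw [← setLIntegral_one]
    exact lintegral_mono fun v => prob_le_one
  have key : ENNReal.ofReal q1 * Hs F μ x ≤
      Hs F μ (x - t) + ENNReal.ofReal (q1 - q) * Hs F μ x := by
    calc ENNReal.ofReal q1 * Hs F μ x
        ≤ ENNReal.ofReal q1 * (∫⁻ v in Ioc 0 (x / A'), F (Ioi (x / v)) ∂μ +
            ENNReal.ofReal ((q1 - q) / q1) * Hs F μ x) := by
          gcongr
          exact (lintegral_mono_set hsub).trans ((lintegral_union_le _ _ _).trans
            (add_le_add le_rfl (p3.trans h3)))
      _ = ENNReal.ofReal q1 * (∫⁻ v in Ioc 0 (x / A'), F (Ioi (x / v)) ∂μ) +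
            (ENNReal.ofReal q1 * ENNReal.ofReal ((q1 - q) / q1)) * Hs F μ x := by ring
      _ ≤ _ := by
          rw [← ENNReal.ofReal_mul hq10.le, mul_div_cancel₀ _ hq10.ne']
          gcongr
  have hsplit : ENNReal.ofReal q1 = ENNReal.ofReal q + ENNReal.ofReal (q1 - q) := by
    rw [← ENNReal.ofReal_add hq0.le (by linarith)]; congr 1; ring
  rw [hsplit, add_mul] at key
  exact (ENNReal.add_le_add_iff_right
    (ENNReal.mul_ne_top ENNReal.ofReal_ne_top (Hs_ne_top F μ x))).1 key

end SarmanovAux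

namespace SarmanovAux

lemma psi_ae (G : Measure ℝ) [IsProbabilityMeasure G] (φ ψ : ℝ → ℝ) (hφ : Integrable φ G)
    (hψ : ∀ y, (∀ δ > 0, 0 < G (Ioo (y - δ) (y + δ))) →
      Tendsto (fun δ : ℝ => (∫ v in Ioc (y - δ) (y + δ), φ v ∂G) / G.real (Ioc (y - δ) (y + δ)))
        (nhdsWithin 0 (Ioi 0)) (nhds (ψ y))) :
    ∀ᵐ y ∂G, ψ y = φ y := by
  have hsupp : ∀ᵐ y ∂G, y ∈ G.support := Measure.support_mem_ae
  filter_upwards [hsupp,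
    (Besicovitch.vitaliFamily G).ae_tendsto_average hφ.locallyIntegrable] with y hy hav
  have h1 := hψ y (fun δ hδ => (Measure.mem_support_iff_forall y).1 hy _
    (Ioo_mem_nhds (by linarith) (by linarith)))
  have h2 := hav.comp (Besicovitch.tendsto_filterAt G y)
  have hcount : Set.Countable {t : ℝ | 0 < G {a : ℝ | y - a = t}} :=
    Measure.countable_meas_level_set_pos (μ := G) (g := fun a : ℝ => y - a) (by fun_prop)
  have hdense := hcount.dense_compl ℝ
  set good : Set ℝ := {t : ℝ | 0 < G {a : ℝ | y - a = t}}ᶜ with hgood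
  have hne : (nhdsWithin (0:ℝ) (Ioi 0 ∩ good)).NeBot := by
    rw [← mem_closure_iff_nhdsWithin_neBot]
    refine closure_minimal (hdense.open_subset_closure_inter isOpen_Ioi) isClosed_closure ?_
    simp
  have hle : nhdsWithin (0:ℝ) (Ioi 0 ∩ good) ≤ nhdsWithin 0 (Ioi 0) :=
    nhdsWithin_mono _ inter_subset_left
  refine tendsto_nhds_unique (h1.mono_left hle) ((h2.mono_left hle).congr' ?_)
  filter_upwards [self_mem_nhdsWithin] with δ hδ
  have hz : G {y - δ} = 0 := by
    have h3 := hδ.2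
    rw [hgood, mem_compl_iff, mem_ofPred_eq, not_lt, nonpos_iff_eq_zero] at h3
    rw [← h3]; congr 1; ext a; simp; constructor <;> intro h <;> linarith
  have hae : Ioc (y - δ) (y + δ) =ᵐ[G] Icc (y - δ) (y + δ) := Ioc_ae_eq_Icc' hz
  simp only [Function.comp]
  rw [Real.closedBall_eq_Icc, setAverage_eq, setIntegral_congr_set hae, measureReal_congr hae,
    smul_eq_mul, div_eq_inv_mul]

lemma equiv_real (T S g : ℝ → ℝ) (C : ℝ) (hC : 0 < C) (hT : ∀ x, 0 ≤ T x)
    (hg : ∀ x, 0 ≤ g x)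
    (h1 : ∀ ε > 0, ε < 1 → ∃ A > 0, ∀ x ≥ 0, T x ≤ (1 + ε) * S x + g (A * x) ∧
      (1 - ε) * S x ≤ T x + C * g (A * x))
    (hgT : ∀ b > 0, (fun x => g (b * x)) =o[atTop] T) : S ~[atTop] T := by
  unfold IsEquivalent
  rw [isLittleO_iff]
  intro e he
  set ε := min (e / 4) (1 / 2) with hε
  have hε0 : 0 < ε := by rw [hε]; positivity
  have hε1 : ε ≤ 1 / 2 := min_le_right _ _
  have hε2 : ε ≤ e / 4 := min_le_left _ _
  obtain ⟨A, hA, hAx⟩ := h1 ε hε0 (by linarith)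
  filter_upwards [isLittleO_iff.1 (hgT A hA) hε0,
    isLittleO_iff.1 (hgT A hA) (show 0 < ε / C by positivity), eventually_ge_atTop 0]
    with x hx1 hx2 hx0
  obtain ⟨ha, hb⟩ := hAx x hx0
  rw [Real.norm_of_nonneg (hg _), Real.norm_of_nonneg (hT _)] at hx1 hx2
  have hx3 : C * g (A * x) ≤ ε * T x := by
    rw [div_mul_eq_mul_div, le_div_iff₀ hC] at hx2; linarith
  have hTx := hT x
  rw [Real.norm_of_nonneg hTx, Pi.sub_apply, Real.norm_eq_abs, abs_le]
  have hSx : 0 ≤ S x := by nlinarith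
  have hST : S x ≤ 3 * T x := by nlinarith
  have hεT : ε * T x ≤ e / 4 * T x := by gcongr
  have hεS : ε * S x ≤ ε * (3 * T x) := by gcongr
  constructor
  · by_cases h : S x ≤ T x
    · have : ε * S x ≤ ε * T x := by gcongr
      nlinarith
    · nlinarith
  · nlinarith

lemma density_bound (φ₁ φ₂ : ℝ → ℝ) (θ d₁ : ℝ) (hd₁ : 0 < d₁) (F : Measure ℝ)
    (hφ₁ : Tendsto φ₁ atTop (nhds d₁)) (hint : Integrable φ₁ F) (hz : ∫ x, φ₁ x ∂F = 0)
    (hF : ∀ z, F (Ioi z) ≠ 0)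
    (hnn : ∀ x y : ℝ, 0 ≤ y → 0 ≤ 1 + θ * φ₁ x * φ₂ y) :
    ∃ M > 0, ∀ y ≥ 0, |θ * φ₂ y| ≤ M := by
  obtain ⟨N, hN⟩ := eventually_atTop.1 (hφ₁.eventually (lt_mem_nhds hd₁))
  have hx0 := hN N le_rfl
  obtain ⟨x1, hx1⟩ : ∃ x, φ₁ x < 0 := by
    by_contra! hcon
    have h0 := (integral_eq_zero_iff_of_nonneg hcon hint).1 hz
    refine hF N ?_
    refine measure_mono_null ?_ (ae_iff.1 h0)
    intro x hx
    simpa using (hN x (le_of_lt hx)).ne'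
  refine ⟨max (1 / φ₁ N) (1 / -φ₁ x1), lt_max_of_lt_left (by positivity), fun y hy => ?_⟩
  have ha := hnn N y hy
  have hb := hnn x1 y hy
  rw [abs_le]
  constructor
  · have : -(1 / φ₁ N) ≤ θ * φ₂ y := by
      rw [neg_le, le_div_iff₀ hx0]; nlinarith
    linarith [le_max_left (1 / φ₁ N) (1 / -φ₁ x1)]
  · refine le_trans ?_ (le_max_right _ _)
    rw [le_div_iff₀ (by linarith)]; nlinarith

lemma Hs_eq_prod (F μ : Measure ℝ) [IsProbabilityMeasure F] [IsFiniteMeasure μ]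
    (hμ : ∀ᵐ v ∂μ, 0 ≤ v) (x : ℝ) (hx : 0 ≤ x) :
    (F.prod μ) {p | x < p.1 * p.2} = Hs F μ x := by
  have hm : MeasurableSet {p : ℝ × ℝ | x < p.1 * p.2} :=
    measurableSet_lt measurable_const (measurable_fst.mul measurable_snd)
  rw [Measure.prod_apply_symm hm, Hs, ← lintegral_indicator measurableSet_Ioi]
  refine lintegral_congr_ae ?_
  filter_upwards [hμ] with v hv
  rcases hv.eq_or_lt with h | h
  · subst h
    simp [not_lt.2 hx]
  · rw [indicator_of_mem (show v ∈ Ioi (0:ℝ) from h)]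
    congr 1
    ext u
    simp [div_lt_iff₀ h]

lemma compare (F G : Measure ℝ) [IsProbabilityMeasure F] [IsProbabilityMeasure G]
    (φ₁ φ₂ : ℝ → ℝ) (θ d₁ c M : ℝ) (hc : 0 < c) (hM : 0 < M)
    (hm2 : Measurable φ₂)
    (hG0 : ∀ᵐ v ∂G, 0 ≤ v)
    (hφ₁ : Tendsto φ₁ atTop (nhds d₁)) (hMb : ∀ y ≥ 0, |θ * φ₂ y| ≤ M)
    (hh : ∀ᵐ v ∂G, c ≤ 1 + θ * d₁ * φ₂ v)
    (J : Measure (ℝ × ℝ))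
    (hJ : J = (F.prod G).withDensity (fun p => ENNReal.ofReal (1 + θ * φ₁ p.1 * φ₂ p.2)))
    (hJ2 : ∀ b, J {p | b < p.2} = G (Ioi b))
    (hJ0 : ∀ᵐ p ∂J, 0 ≤ p.2)
    (μ : Measure ℝ) [IsFiniteMeasure μ]
    (hμ : μ = G.withDensity (fun v => ENNReal.ofReal (1 + θ * d₁ * φ₂ v)))
    (ε : ℝ) (hε : 0 < ε) (hε1 : ε < 1) :
    ∃ A > 0, ∀ x ≥ 0,
      J {p | x < p.1 * p.2} ≤ ENNReal.ofReal (1 + ε) * Hs F μ x + G (Ioi (A * x)) ∧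
      ENNReal.ofReal (1 - ε) * Hs F μ x ≤ J {p | x < p.1 * p.2} + μ (Ioi (A * x)) := by
  have hμ0 : ∀ᵐ v ∂μ, 0 ≤ v := by
    rw [hμ]; exact (withDensity_absolutelyContinuous _ _).ae_le hG0
  have hev : ∀ᶠ u in atTop, |φ₁ u - d₁| < ε * c / M := by
    have := hφ₁.eventually (Metric.ball_mem_nhds d₁ (show 0 < ε * c / M by positivity))
    simpa [Real.dist_eq] using this
  obtain ⟨A, hA⟩ := eventually_atTop.1 hev
  set A' := max A 1 with hA'
  have hA'0 : 0 < A' := lt_of_lt_of_le one_pos (le_max_right _ _)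
  have hstar : F.prod μ = (F.prod G).withDensity
      (fun p => ENNReal.ofReal (1 + θ * d₁ * φ₂ p.2)) := by
    rw [hμ, prod_withDensity_right]
    fun_prop
  have hpt : ∀ᵐ p ∂(F.prod G), A' < p.1 →
      1 + θ * φ₁ p.1 * φ₂ p.2 ≤ (1 + ε) * (1 + θ * d₁ * φ₂ p.2) ∧
      (1 - ε) * (1 + θ * d₁ * φ₂ p.2) ≤ 1 + θ * φ₁ p.1 * φ₂ p.2 := by
    have hs := (Measure.quasiMeasurePreserving_snd (μ := F) (ν := G)).ae (hG0.and hh)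
    filter_upwards [hs] with p hp hpA
    obtain ⟨hp0, hpc⟩ := hp
    have h1 := hA p.1 ((le_max_left A 1).trans hpA.le)
    have h2 := hMb p.2 hp0
    have h3 : |(φ₁ p.1 - d₁) * (θ * φ₂ p.2)| ≤ ε * c := by
      rw [abs_mul]
      calc _ ≤ ε * c / M * M := by gcongr
        _ = _ := by field_simp
    have h4 : ε * c ≤ ε * (1 + θ * d₁ * φ₂ p.2) := by gcongr
    rw [abs_le] at h3
    constructor <;> nlinarith
  have hS : ∀ S : Set (ℝ × ℝ), MeasurableSet S → (∀ p ∈ S, A' < p.1) →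
      J S ≤ ENNReal.ofReal (1 + ε) * (F.prod μ) S ∧
      ENNReal.ofReal (1 - ε) * (F.prod μ) S ≤ J S := by
    intro S hSm hSA
    rw [hstar, hJ, withDensity_apply _ hSm, withDensity_apply _ hSm,
      ← lintegral_const_mul' _ _ ENNReal.ofReal_ne_top,
      ← lintegral_const_mul' _ _ ENNReal.ofReal_ne_top]
    constructor
    · refine lintegral_mono_ae ?_
      filter_upwards [ae_restrict_of_ae hpt, ae_restrict_mem hSm] with p hp hpS
      rw [← ENNReal.ofReal_mul (by linarith)]
      exact ENNReal.ofReal_le_ofReal (hp (hSA p hpS)).1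
    · refine lintegral_mono_ae ?_
      filter_upwards [ae_restrict_of_ae hpt, ae_restrict_mem hSm] with p hp hpS
      rw [← ENNReal.ofReal_mul (by linarith)]
      exact ENNReal.ofReal_le_ofReal (hp (hSA p hpS)).2
  refine ⟨1 / A', by positivity, fun x hx => ?_⟩
  have hm : MeasurableSet {p : ℝ × ℝ | x < p.1 * p.2} :=
    measurableSet_lt measurable_const (measurable_fst.mul measurable_snd)
  have hmA : MeasurableSet {p : ℝ × ℝ | A' < p.1} :=
    measurableSet_lt measurable_const measurable_fst
  obtain ⟨hSa, hSb⟩ := hS ({p : ℝ × ℝ | x < p.1 * p.2} ∩ {p : ℝ × ℝ | A' < p.1})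
    (hm.inter hmA) (fun p hp => hp.2)
  have hincl : ∀ p : ℝ × ℝ, 0 ≤ p.2 → x < p.1 * p.2 →
      p ∈ ({p : ℝ × ℝ | x < p.1 * p.2} ∩ {p : ℝ × ℝ | A' < p.1}) ∪
        {p : ℝ × ℝ | 1 / A' * x < p.2} := by
    intro p hp hxp
    rcases le_or_gt p.1 A' with h | h
    · right
      show 1 / A' * x < p.2
      rw [one_div_mul_eq_div, div_lt_iff₀ hA'0]
      nlinarith
    · left; exact ⟨hxp, h⟩
  have hsplit : ∀ K : Measure (ℝ × ℝ), (∀ᵐ p ∂K, 0 ≤ p.2) →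
      K {p : ℝ × ℝ | x < p.1 * p.2} ≤
        K ({p : ℝ × ℝ | x < p.1 * p.2} ∩ {p : ℝ × ℝ | A' < p.1}) +
          K {p : ℝ × ℝ | 1 / A' * x < p.2} := by
    intro K hK
    refine le_trans (measure_mono_ae ?_) (measure_union_le _ _)
    filter_upwards [hK] with p hp hpx
    exact hincl p hp hpx
  constructor
  · rw [← Hs_eq_prod F μ hμ0 x hx, ← hJ2]
    refine (hsplit J hJ0).trans (add_le_add (hSa.trans ?_) le_rfl)
    gcongr
    exact inter_subset_left
  · have hs0 := (Measure.quasiMeasurePreserving_snd (μ := F) (ν := μ)).ae hμ0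
    have h5 : (F.prod μ) {p : ℝ × ℝ | 1 / A' * x < p.2} = μ (Ioi (1 / A' * x)) := by
      have : {p : ℝ × ℝ | 1 / A' * x < p.2} = univ ×ˢ Ioi (1 / A' * x) := by
        ext p; simp
      rw [this, Measure.prod_prod]; simp
    rw [← Hs_eq_prod F μ hμ0 x hx]
    calc _ ≤ ENNReal.ofReal (1 - ε) *
          ((F.prod μ) ({p : ℝ × ℝ | x < p.1 * p.2} ∩ {p : ℝ × ℝ | A' < p.1}) +
            μ (Ioi (1 / A' * x))) := by
          gcongr
          rw [← h5]
          exact hsplit _ hs0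
      _ ≤ _ := by
          rw [mul_add]
          refine add_le_add (hSb.trans (measure_mono inter_subset_left)) ?_
          calc _ ≤ 1 * μ (Ioi (1 / A' * x)) := by
                gcongr
                exact ENNReal.ofReal_le_one.2 (by linarith)
            _ = _ := one_mul _

lemma exists_gt_tail (G : Measure ℝ) (b : ℝ) (hb : G (Ioi b) ≠ 0) : ∃ b' > b, G (Ioi b') ≠ 0 := by
  by_contra! hcon
  refine hb ?_
  have : Ioi b ⊆ ⋃ n : ℕ, Ioi (b + 1 / ((n:ℝ) + 1)) := by
    intro v hv
    have hv : 0 < v - b := sub_pos.2 hv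
    obtain ⟨n, hn⟩ := exists_nat_one_div_lt hv
    refine mem_iUnion.2 ⟨n, ?_⟩
    show b + 1 / ((n:ℝ) + 1) < v
    linarith
  refine measure_mono_null this (measure_iUnion_null fun n => hcon _ ?_)
  have : (0:ℝ) < 1 / ((n:ℝ) + 1) := by positivity
  linarith

lemma rvTail_eq {Ω : Type*} [MeasureSpace Ω] (Z : Ω → ℝ) (hZ : Measurable Z) (x : ℝ) :
    rvTail Z x = (Measure.map Z ℙ (Ioi x)).toReal := by
  rw [Measure.map_apply hZ measurableSet_Ioi]; rfl

lemma exists_kappa {Ω : Type*} [MeasureSpace Ω] [IsProbabilityMeasure (ℙ : Measure Ω)]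
    (Y : Ω → ℝ) (hYm : Measurable Y) (hYnonneg : ∀ ω, 0 ≤ Y ω) (hYnd : ℙ {ω | Y ω = 0} ≠ 1)
    (γ : ℝ) :
    ∃ κ ≥ 0, gammaOverBeta Y γ = γ * κ ∧ (∀ᵐ v ∂(Measure.map Y ℙ), κ * v ≤ 1) ∧
      ∀ r > κ, Measure.map Y ℙ (Ioi (1 / r)) ≠ 0 := by
  set G := Measure.map Y ℙ with hG
  have : IsProbabilityMeasure G := Measure.isProbabilityMeasure_map hYm.aemeasurable
  have htail : ∀ y, 0 < rvTail Y y ↔ G (Ioi y) ≠ 0 := by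
    intro y
    rw [rvTail_eq Y hYm, ENNReal.toReal_pos_iff]
    exact ⟨fun h => h.1.ne', fun h => ⟨pos_iff_ne_zero.2 h, measure_lt_top _ _⟩⟩
  have h0 : G (Ioi 0) ≠ 0 := by
    intro h
    apply hYnd
    rw [← mem_ae_iff_prob_eq_one]
    · rw [hG, Measure.map_apply hYm measurableSet_Ioi] at h
      have h' : ∀ᵐ ω, ¬ (0 < Y ω) := by
        rw [ae_iff]; simp only [not_not]; exact h
      filter_upwards [h'] with ω hω
      exact le_antisymm (not_lt.1 hω) (hYnonneg ω)
    · exact hYm (measurableSet_singleton 0)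
  set S := {y : ℝ | 0 < rvTail Y y} with hS
  have hSmem : ∀ y, y ∈ S ↔ G (Ioi y) ≠ 0 := htail
  have hmono : ∀ y y', y ≤ y' → G (Ioi y') ≠ 0 → G (Ioi y) ≠ 0 := fun y y' h h1 h2 =>
    h1 (measure_mono_null (Ioi_subset_Ioi h) h2)
  by_cases hbdd : BddAbove S
  · obtain ⟨b, hb0, hb⟩ := exists_gt_tail G 0 h0
    have hβ : 0 < sSup S := lt_of_lt_of_le hb0 (le_csSup hbdd ((hSmem b).2 hb))
    refine ⟨1 / sSup S, by positivity, ?_, ?_, ?_⟩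
    · unfold gammaOverBeta
      rw [if_pos hbdd, mul_one_div]
    · have hz : G (Ioi (sSup S)) = 0 := by
        by_contra hne
        obtain ⟨b', hb', hb'2⟩ := exists_gt_tail G _ hne
        exact absurd (le_csSup hbdd ((hSmem b').2 hb'2)) (not_le.2 hb')
      have : ∀ᵐ v ∂G, ¬ (sSup S < v) := by
        rw [ae_iff]; simp only [not_not]; exact hz
      filter_upwards [this] with v hv
      rw [one_div_mul_eq_div, div_le_one hβ]
      exact not_lt.1 hv
    · intro r hr
      have hr' : 1 / r < sSup S := (one_div_lt hβ (lt_trans (by positivity) hr)).1 hr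
      obtain ⟨y, hy, hry⟩ := exists_lt_of_lt_csSup ⟨b, (hSmem b).2 hb⟩ hr'
      exact hmono _ _ hry.le ((hSmem y).1 hy)
  · refine ⟨0, le_rfl, ?_, by simp, ?_⟩
    · unfold gammaOverBeta
      rw [if_neg hbdd, mul_zero]
    · intro r hr
      rw [not_bddAbove_iff] at hbdd
      obtain ⟨y, hy, hry⟩ := hbdd (1 / r)
      exact hmono _ _ hry.le ((hSmem y).1 hy)

lemma sarmanov_aux {Ω : Type*} [MeasureSpace Ω] [IsProbabilityMeasure (ℙ : Measure Ω)]
    (X Y : Ω → ℝ) (hXm : Measurable X) (hYm : Measurable Y)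
    (hYnonneg : ∀ ω, 0 ≤ Y ω) (hYnd : ℙ {ω | Y ω = 0} ≠ 1)
    (φ₁ φ₂ ψ : ℝ → ℝ) (θ c d₁ : ℝ)
    (hSar : Sarmanov X Y φ₁ φ₂ θ)
    (hc : 0 < c) (hd₁ : 0 < d₁) (hψm : Measurable ψ)
    (hψ : SarmanovPsi Y φ₂ ψ)
    (hφ₁ : Filter.Tendsto φ₁ atTop (nhds d₁))
    (has : ℙ {ω | c ≤ 1 + θ * d₁ * ψ (Y ω)} = 1)
    (hA2 : Assumption2 X Y)
    (γ : ℝ) (hγ : 0 ≤ γ) (hFL : MemLGamma X γ) :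
    MemLGamma (fun ω => X ω * Y ω) (gammaOverBeta Y γ) := by
  obtain ⟨hm1, hm2, hi1, hi2, hz1, hz2, hnn, hlaw⟩ := hSar
  obtain ⟨κ, hκ, hκeq, hκ1, hκ2⟩ := exists_kappa Y hYm hYnonneg hYnd γ
  rw [hκeq]
  set F := Measure.map X ℙ with hF
  set G := Measure.map Y ℙ with hG
  have : IsProbabilityMeasure F := Measure.isProbabilityMeasure_map hXm.aemeasurable
  have : IsProbabilityMeasure G := Measure.isProbabilityMeasure_map hYm.aemeasurable
  have hG0 : ∀ᵐ v ∂G, 0 ≤ v :=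
    (ae_map_iff hYm.aemeasurable measurableSet_Ici).2 (Eventually.of_forall hYnonneg)
  have hFne : ∀ z, F (Ioi z) ≠ 0 := by
    intro z hz
    have h1 := hFL.1 (max z 1) (lt_of_lt_of_le one_pos (le_max_right _ _))
    rw [rvTail_eq X hXm, ← hF, measure_mono_null (Ioi_subset_Ioi (le_max_left z 1)) hz] at h1
    simp at h1
  have hi2' : Integrable φ₂ G :=
    (integrable_map_measure hm2.aestronglyMeasurable hYm.aemeasurable).2 hi2
  have hi1' : Integrable φ₁ F :=
    (integrable_map_measure hm1.aestronglyMeasurable hXm.aemeasurable).2 hi1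
  have hz1' : ∫ x, φ₁ x ∂F = 0 := by
    rw [hF, integral_map hXm.aemeasurable hm1.aestronglyMeasurable]; exact hz1
  have hpsi : ∀ᵐ y ∂G, ψ y = φ₂ y := by
    refine psi_ae G φ₂ ψ hi2' fun y hy => ?_
    have hys : y ∈ distSupport Y := by
      intro δ hδ
      have := hy δ hδ
      rwa [hG, Measure.map_apply hYm measurableSet_Ioo] at this
    refine (hψ y hys).congr' ?_
    filter_upwards [self_mem_nhdsWithin] with δ hδ
    have hδ : 0 < δ := hδ
    congr 1
    have e1 : ∀ b, rvCdf Y b = G.real (Iic b) := by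
      intro b
      rw [measureReal_def, hG, Measure.map_apply hYm measurableSet_Iic]; rfl
    have e2 : Ioc (y - δ) (y + δ) = Iic (y + δ) \ Iic (y - δ) := by
      ext v; simp [and_comm]
    rw [e1, e1, e2, measureReal_sdiff (Iic_subset_Iic.2 (by linarith))
      measurableSet_Iic]
  have hh : ∀ᵐ v ∂G, c ≤ 1 + θ * d₁ * φ₂ v := by
    have hms : MeasurableSet {v : ℝ | c ≤ 1 + θ * d₁ * ψ v} :=
      measurableSet_le measurable_const (by fun_prop)
    have h1 : ∀ᵐ v ∂G, c ≤ 1 + θ * d₁ * ψ v := by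
      refine (ae_map_iff hYm.aemeasurable hms).2 ?_
      exact (mem_ae_iff_prob_eq_one (hYm hms)).2 has
    filter_upwards [h1, hpsi] with v hv hv2
    rwa [← hv2]
  obtain ⟨M, hM, hMb⟩ := density_bound φ₁ φ₂ θ d₁ hd₁ F hφ₁ hi1' hz1' hFne hnn
  set μ := G.withDensity (fun v => ENNReal.ofReal (1 + θ * d₁ * φ₂ v)) with hμ
  set C := 1 + d₁ * M with hC
  have hC0 : 0 < C := by positivity
  have hμle : ∀ S, MeasurableSet S → μ S ≤ ENNReal.ofReal C * G S := by
    intro S hS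
    rw [hμ, withDensity_apply _ hS, ← setLIntegral_const]
    refine lintegral_mono_ae (ae_restrict_of_ae ?_)
    filter_upwards [hG0] with v hv
    refine ENNReal.ofReal_le_ofReal ?_
    have := (abs_le.1 (hMb v hv)).2
    rw [hC]; nlinarith
  have hμge : ∀ S, MeasurableSet S → ENNReal.ofReal c * G S ≤ μ S := by
    intro S hS
    rw [hμ, withDensity_apply _ hS, ← setLIntegral_const]
    refine lintegral_mono_ae (ae_restrict_of_ae ?_)
    filter_upwards [hh] with v hv
    exact ENNReal.ofReal_le_ofReal hv
  have : IsFiniteMeasure μ := ⟨lt_of_le_of_lt (hμle _ MeasurableSet.univ) (by simp)⟩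
  have hμκ1 : ∀ᵐ v ∂μ, κ * v ≤ 1 := (withDensity_absolutelyContinuous _ _).ae_le hκ1
  have hμκ2 : ∀ r > κ, μ (Ioi (1 / r)) ≠ 0 := by
    intro r hr h
    have := hμge (Ioi (1 / r)) measurableSet_Ioi
    rw [h, nonpos_iff_eq_zero, mul_eq_zero] at this
    rcases this with h1 | h1
    · simp at h1; linarith
    · exact hκ2 r hr h1
  set J := Measure.map (fun ω => (X ω, Y ω)) ℙ with hJ
  have hXY : Measurable (fun ω => (X ω, Y ω)) := hXm.prodMk hYm
  have : IsProbabilityMeasure J := Measure.isProbabilityMeasure_map hXY.aemeasurable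
  have hJ2 : ∀ b, J {p | b < p.2} = G (Ioi b) := by
    intro b
    rw [hJ, hG, Measure.map_apply hXY (measurableSet_lt measurable_const measurable_snd),
      Measure.map_apply hYm measurableSet_Ioi]
    rfl
  have hJ0 : ∀ᵐ p ∂J, 0 ≤ p.2 :=
    (ae_map_iff hXY.aemeasurable (measurableSet_le measurable_const measurable_snd)).2
      (Eventually.of_forall hYnonneg)
  have hT : ∀ x, rvTail (fun ω => X ω * Y ω) x = (J {p | x < p.1 * p.2}).toReal := by
    intro x
    have hm : MeasurableSet {p : ℝ × ℝ | x < p.1 * p.2} :=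
      measurableSet_lt measurable_const (measurable_fst.mul measurable_snd)
    rw [hJ, Measure.map_apply hXY hm]
    rfl
  set T := rvTail (fun ω => X ω * Y ω) with hTdef
  have hT0 : ∀ x, 0 ≤ T x := fun x => ENNReal.toReal_nonneg
  set S : ℝ → ℝ := fun x => (Hs F μ x).toReal with hSdef
  have hS0 : ∀ x, 0 ≤ S x := fun x => ENNReal.toReal_nonneg
  have hg : ∀ x, rvTail Y x = (G (Ioi x)).toReal := rvTail_eq Y hYm
  have hST : S ~[atTop] T := by
    refine equiv_real T S (rvTail Y) C hC0 hT0 (fun x => ENNReal.toReal_nonneg) ?_ hA2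
    intro ε hε hε1
    obtain ⟨A, hA, hAx⟩ := compare F G φ₁ φ₂ θ d₁ c M hc hM hm2 hG0 hφ₁ hMb hh J hlaw hJ2 hJ0
      μ hμ ε hε hε1
    refine ⟨A, hA, fun x hx => ?_⟩
    obtain ⟨ha, hb⟩ := hAx x hx
    have hHt := Hs_ne_top F μ x
    constructor
    · have := ENNReal.toReal_mono (ENNReal.add_ne_top.2
        ⟨ENNReal.mul_ne_top ENNReal.ofReal_ne_top hHt, measure_ne_top _ _⟩) ha
      rw [ENNReal.toReal_add (ENNReal.mul_ne_top ENNReal.ofReal_ne_top hHt) (measure_ne_top _ _),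
        ENNReal.toReal_mul, ENNReal.toReal_ofReal (by linarith)] at this
      rw [hT, hg]; exact this
    · have hb' := hb.trans (add_le_add le_rfl (hμle _ measurableSet_Ioi))
      have hne2 : ENNReal.ofReal C * G (Ioi (A * x)) ≠ ⊤ :=
        ENNReal.mul_ne_top ENNReal.ofReal_ne_top (measure_ne_top _ _)
      have := ENNReal.toReal_mono (ENNReal.add_ne_top.2 ⟨measure_ne_top _ _, hne2⟩) hb'
      rw [ENNReal.toReal_add (measure_ne_top _ _) hne2,
        ENNReal.toReal_mul, ENNReal.toReal_mul, ENNReal.toReal_ofReal (by linarith),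
        ENNReal.toReal_ofReal hC0.le] at this
      rw [hT, hg]; exact this
  have hμo : ∀ b > 0, ∀ ε > 0, ∀ᶠ x in atTop, μ (Ioi (b * x)) ≤ ENNReal.ofReal ε * Hs F μ x := by
    intro b hb ε hε
    have h1 : (fun x => rvTail Y (b * x)) =o[atTop] S := (hA2 b hb).trans_isBigO hST.symm.isBigO
    filter_upwards [isLittleO_iff.1 h1 (show 0 < ε / C by positivity)] with x hx
    rw [Real.norm_of_nonneg (hS0 x), Real.norm_of_nonneg (show 0 ≤ rvTail Y (b * x) from
      ENNReal.toReal_nonneg), hg,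
      div_mul_eq_mul_div, le_div_iff₀ hC0] at hx
    refine (hμle _ measurableSet_Ioi).trans ?_
    rw [← ENNReal.ofReal_toReal (measure_ne_top G (Ioi (b * x))),
      ← ENNReal.ofReal_toReal (Hs_ne_top F μ x), ← ENNReal.ofReal_mul hC0.le,
      ← ENNReal.ofReal_mul hε.le]
    refine ENNReal.ofReal_le_ofReal ?_
    rw [mul_comm]; exact hx
  have hFt := rvTail_eq X hXm
  have hup : ∀ s > 0, ∀ q > Real.exp (γ * s), ∀ᶠ z in atTop,
      F (Ioi (z - s)) ≤ ENNReal.ofReal q * F (Ioi z) := by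
    intro s hs q hq
    have hE := Real.exp_pos (γ * s)
    set E := Real.exp (γ * s) with hEdef
    have h1 := hFL.2 s hs
    unfold IsEquivalent at h1
    filter_upwards [isLittleO_iff.1 h1 (show 0 < (q - E) / E from div_pos (by linarith) hE)]
      with z hz
    have hz0 : 0 ≤ rvTail X z := ENNReal.toReal_nonneg
    rw [Pi.sub_apply, Real.norm_eq_abs, ← hEdef, Real.norm_of_nonneg (mul_nonneg hE.le hz0), ← mul_assoc, div_mul_cancel₀ _ hE.ne', abs_le, hFt, hFt] at hz
    rw [← ENNReal.ofReal_toReal (measure_ne_top F (Ioi (z - s))),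
      ← ENNReal.ofReal_toReal (measure_ne_top F (Ioi z)), ← ENNReal.ofReal_mul (by linarith)]
    refine ENNReal.ofReal_le_ofReal ?_
    linarith [hz.2]
  have hlow : ∀ s ≥ 0, ∀ q < Real.exp (γ * s), ∀ᶠ z in atTop,
      ENNReal.ofReal q * F (Ioi z) ≤ F (Ioi (z - s)) := by
    intro s hs q hq
    rcases le_or_gt q 0 with hq0 | hq0
    · simp [ENNReal.ofReal_of_nonpos hq0]
    rcases (show 0 ≤ s from hs).eq_or_lt with hs0 | hs0
    · subst hs0
      refine Eventually.of_forall fun z => ?_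
      rw [sub_zero]
      calc _ ≤ 1 * F (Ioi z) := by
            gcongr
            exact ENNReal.ofReal_le_one.2 (by simpa using hq.le)
        _ = _ := one_mul _
    have hE := Real.exp_pos (γ * s)
    set E := Real.exp (γ * s) with hEdef
    have h1 := hFL.2 s hs0
    unfold IsEquivalent at h1
    filter_upwards [isLittleO_iff.1 h1 (show 0 < (E - q) / E from div_pos (by linarith) hE)]
      with z hz
    have hz0 : 0 ≤ rvTail X z := ENNReal.toReal_nonneg
    rw [Pi.sub_apply, Real.norm_eq_abs, ← hEdef, Real.norm_of_nonneg (mul_nonneg hE.le hz0), ← mul_assoc, div_mul_cancel₀ _ hE.ne', abs_le, hFt, hFt] at hz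
    rw [← ENNReal.ofReal_toReal (measure_ne_top F (Ioi (z - s))),
      ← ENNReal.ofReal_toReal (measure_ne_top F (Ioi z)), ← ENNReal.ofReal_mul hq0.le]
    refine ENNReal.ofReal_le_ofReal ?_
    linarith [hz.1]
  have hSpos : ∀ x ≥ 0, 0 < S x := by
    intro x hx
    refine ENNReal.toReal_pos ?_ (Hs_ne_top F μ x)
    intro h
    have h1 := le_Hs F μ hx (show 0 < κ + 1 by linarith)
    rw [h, nonpos_iff_eq_zero, mul_eq_zero] at h1
    exact h1.elim (hFne _) (hμκ2 _ (by linarith))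
  refine ⟨?_, ?_⟩
  · intro x _
    have h1 := hST.symm
    unfold IsEquivalent at h1
    obtain ⟨y, hy, hyx, hy0⟩ := ((isLittleO_iff.1 h1 (show (0:ℝ) < 1 / 2 by norm_num)).and
      ((eventually_ge_atTop x).and (eventually_ge_atTop 0))).exists
    rw [Pi.sub_apply, Real.norm_eq_abs, Real.norm_of_nonneg (hS0 y), abs_le] at hy
    have hTy : 0 < T y := by linarith [hSpos y hy0, hy.1]
    refine lt_of_lt_of_le hTy (ENNReal.toReal_mono (measure_ne_top _ _) (measure_mono ?_))
    intro ω hω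
    exact lt_of_le_of_lt hyx hω
  · intro t ht
    have hShift : Tendsto (fun x : ℝ => x - t) atTop atTop :=
      tendsto_atTop_add_const_right _ (-t) tendsto_id
    have hmid : (fun x => S (x - t)) ~[atTop] (fun x => Real.exp (γ * κ * t) * S x) := by
      have hE := Real.exp_pos (γ * κ * t)
      unfold IsEquivalent
      rw [isLittleO_iff]
      intro e he
      set E := Real.exp (γ * κ * t) with hEdef
      have hu := Hs_upper F μ γ κ hγ hκ hup hlow hμκ2 hμo t ht (E + e * E)
        (by rw [← hEdef]; linarith [mul_pos he hE])
      have hl := Hs_lower F μ γ κ hκ hlow hμκ1 hμo t ht (E - e * E)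
        (by rw [← hEdef]; linarith [mul_pos he hE])
      filter_upwards [hu, hl] with x hux hlx
      have hSx := hS0 x
      rw [Pi.sub_apply, Real.norm_eq_abs, Real.norm_of_nonneg (mul_nonneg hE.le hSx), abs_le]
      have hu2 := ENNReal.toReal_mono
        (ENNReal.mul_ne_top ENNReal.ofReal_ne_top (Hs_ne_top F μ x)) hux
      have hl2 := ENNReal.toReal_mono (Hs_ne_top F μ (x - t)) hlx
      rw [ENNReal.toReal_mul, ENNReal.toReal_ofReal (by positivity)] at hu2
      rw [ENNReal.toReal_mul] at hl2
      have hl3 : (E - e * E) * S x ≤ S (x - t) :=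
        le_trans (mul_le_mul_of_nonneg_right (Real.le_coe_toNNReal _) hSx) hl2
      have hu3 : S (x - t) ≤ (E + e * E) * S x := hu2
      constructor <;> linarith
    have hA : (fun x => T (x - t)) ~[atTop] (fun x => S (x - t)) :=
      hST.symm.comp_tendsto hShift
    have hB : (fun x => Real.exp (γ * κ * t) * S x) ~[atTop]
        (fun x => Real.exp (γ * κ * t) * T x) :=
      IsEquivalent.mul (IsEquivalent.refl (u := fun _ : ℝ => Real.exp (γ * κ * t))) hST
    exact (hA.trans hmid).trans hB

end SarmanovAux

theorem product_memL_of_sarmanov {Ω : Type*} [MeasureSpace Ω] [IsProbabilityMeasure (ℙ : Measure Ω)]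
    (X Y : Ω → ℝ) (hXm : Measurable X) (hYm : Measurable Y)
    (hYnonneg : ∀ ω, 0 ≤ Y ω)
    (hFunb : UnboundedDist X)
    (hXnd : ℙ {ω | X ω = 0} ≠ 1) (hYnd : ℙ {ω | Y ω = 0} ≠ 1)
    (φ₁ φ₂ ψ : ℝ → ℝ) (θ c d₁ : ℝ)
    (hSar : Sarmanov X Y φ₁ φ₂ θ)
    (hc : 0 < c) (hd₁ : 0 < d₁) (hψm : Measurable ψ)
    (hψ : SarmanovPsi Y φ₂ ψ)
    (hφ₁ : Filter.Tendsto φ₁ atTop (nhds d₁))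
    (has : ℙ {ω | c ≤ 1 + θ * d₁ * ψ (Y ω)} = 1)
    (hA2 : Assumption2 X Y)
    (γ : ℝ) (hγ : 0 ≤ γ) (hFL : MemLGamma X γ) :
    MemLGamma (fun ω => X ω * Y ω) (gammaOverBeta Y γ) := by
  exact SarmanovAux.sarmanov_aux X Y hXm hYm hYnonneg hYnd φ₁ φ₂ ψ θ c d₁ hSar hc hd₁ hψm hψ
    hφ₁ has hA2 γ hγ hFL
end
end

section
/- Let X be a real-valued random variable with unbounded distribution F and Y a nonnegative random variable with distribution G, neither degenerate at zero, and let H be the distribution of XY. Suppose (X,Y) follows a Sarmanov distribution with kernels φ₁, φ₂ and parameter θ, satisfies Assumption 2 (Ḡ(bx)=o(H̄(x)) for every b>0), and there exist constants c>0, d₁∈(0,∞) and a measurable function ψ such that ψ(y)=lim_{δ→0+} (∫_{y−δ}^{y+δ} φ₂(v) G(dv))/(G(y+δ)−G(y−δ)) for all y in the support of Y, φ₁(x)→d₁ as x→∞, and P(1+θd₁ψ(Y)≥c)=1. If F belongs to the class S(γ) for some γ≥0, then H belongs to S(γ/β_G), where β_G=sup{y:G(y)<1} and γ/β_G is understood as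 0 when β_G=∞. -/
open MeasureTheory ProbabilityTheory Filter Set Asymptotics

noncomputable section

def LLc (m : Measure ℝ) (γ : ℝ) : Prop :=
  (∀ x, 0 < m (Ioi x)) ∧ ∀ t > 0, Tendsto (fun x => m.real (Ioi (x - t)) / m.real (Ioi x)) atTop
    (nhds (Real.exp (γ * t)))

def RRc (m : Measure ℝ) (A x : ℝ) : ENNReal :=
  (m.prod m) {p | x < p.1 + p.2 ∧ A < p.1 ∧ A < p.2}

def RSmall (m : Measure ℝ) : Prop :=
  ∀ ε > 0, ∃ A, ∀ᶠ x in atTop, RRc m A x ≤ ENNReal.ofReal ε * m (Ioi x)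

lemma RRc_anti (m : Measure ℝ) {A B : ℝ} (h : A ≤ B) (x : ℝ) : RRc m B x ≤ RRc m A x := by
  apply measure_mono
  rintro p ⟨h1, h2, h3⟩
  exact ⟨h1, by linarith, by linarith⟩

lemma real_le_iff {α β : Type*} [MeasurableSpace α] [MeasurableSpace β]
    (m : Measure α) (n : Measure β) [IsFiniteMeasure m] [IsFiniteMeasure n]
    (s : Set α) (t : Set β) {C : ℝ} (hC : 0 ≤ C) :
    m.real s ≤ C * n.real t ↔ m s ≤ ENNReal.ofReal C * n t := by
  rw [← ofReal_measureReal (μ := m) (s := s), ← ofReal_measureReal (μ := n) (s := t),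
    ← ENNReal.ofReal_mul hC, ENNReal.ofReal_le_ofReal_iff (by positivity)]

lemma le_real_iff {α β : Type*} [MeasurableSpace α] [MeasurableSpace β]
    (m : Measure α) (n : Measure β) [IsFiniteMeasure m] [IsFiniteMeasure n]
    (s : Set α) (t : Set β) {C : ℝ} (hC : 0 ≤ C) :
    C * n.real t ≤ m.real s ↔ ENNReal.ofReal C * n t ≤ m s := by
  rw [← ofReal_measureReal (μ := m) (s := s), ← ofReal_measureReal (μ := n) (s := t),
    ← ENNReal.ofReal_mul hC, ENNReal.ofReal_le_ofReal_iff (by positivity)]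

lemma LLc.real_pos {m : Measure ℝ} [IsFiniteMeasure m] {γ : ℝ} (h : LLc m γ) (x : ℝ) :
    0 < m.real (Ioi x) := by
  exact ENNReal.toReal_pos (h.1 x).ne' (measure_ne_top _ _)

lemma LLc.tend {m : Measure ℝ} [IsFiniteMeasure m] {γ : ℝ} (h : LLc m γ) (t : ℝ) :
    Tendsto (fun x => m.real (Ioi (x - t)) / m.real (Ioi x)) atTop
    (nhds (Real.exp (γ * t))) := by
  rcases lt_trichotomy t 0 with ht | ht | ht
  · have h1 := h.2 (-t) (by linarith)
    have h2 := h1.comp (tendsto_atTop_add_const_right atTop (-t) tendsto_id)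
    have h3 := h2.inv₀ (Real.exp_pos _).ne'
    rw [← Real.exp_neg] at h3
    have e : -(γ * -t) = γ * t := by ring
    rw [e] at h3
    refine h3.congr fun x => ?_
    simp [sub_eq_add_neg]
  · subst ht
    have : ∀ x, m.real (Ioi (x - 0)) / m.real (Ioi x) = 1 := fun x => by
      rw [sub_zero, div_self (h.real_pos x).ne']
    simp only [this, mul_zero, Real.exp_zero]
    exact tendsto_const_nhds
  · exact h.2 t ht

lemma LLc.up {m : Measure ℝ} [IsFiniteMeasure m] {γ : ℝ} (h : LLc m γ) {t C : ℝ}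
    (hC : Real.exp (γ * t) < C) :
    ∀ᶠ x in atTop, m (Ioi (x - t)) ≤ ENNReal.ofReal C * m (Ioi x) := by
  filter_upwards [(h.tend t).eventually (gt_mem_nhds hC)] with x hx
  rw [← real_le_iff _ _ _ _ ((Real.exp_pos _).trans hC).le]
  rw [div_lt_iff₀ (h.real_pos x)] at hx
  exact hx.le

lemma LLc.low {m : Measure ℝ} [IsFiniteMeasure m] {γ : ℝ} (h : LLc m γ) {t C : ℝ}
    (hC : C < Real.exp (γ * t)) :
    ∀ᶠ x in atTop, ENNReal.ofReal C * m (Ioi x) ≤ m (Ioi (x - t)) := by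
  rcases le_total C 0 with h0 | h0
  · simp [ENNReal.ofReal_of_nonpos h0]
  filter_upwards [(h.tend t).eventually (lt_mem_nhds hC)] with x hx
  rw [← le_real_iff _ _ _ _ h0]
  rw [lt_div_iff₀ (h.real_pos x)] at hx
  exact hx.le

lemma LLc.mk' {m : Measure ℝ} [IsFiniteMeasure m] {γ : ℝ} (h1 : ∀ x, 0 < m (Ioi x))
    (hu : ∀ t > 0, ∀ C, Real.exp (γ * t) < C →
      ∀ᶠ x in atTop, m (Ioi (x - t)) ≤ ENNReal.ofReal C * m (Ioi x))
    (hl : ∀ t > 0, ∀ C > 0, C < Real.exp (γ * t) →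
      ∀ᶠ x in atTop, ENNReal.ofReal C * m (Ioi x) ≤ m (Ioi (x - t))) : LLc m γ := by
  have hp : ∀ x, 0 < m.real (Ioi x) := fun x => by
    exact ENNReal.toReal_pos (h1 x).ne' (measure_ne_top _ _)
  refine ⟨h1, fun t ht => ?_⟩
  rw [tendsto_order]
  constructor
  · intro a ha
    obtain ⟨C, hC1, hC2⟩ := exists_between (max_lt ha (Real.exp_pos (γ * t)))
    have hC0 : 0 < C := (le_max_right _ _).trans_lt hC1
    filter_upwards [hl t ht C hC0 hC2] with x hx
    rw [← le_real_iff _ _ _ _ hC0.le] at hx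
    refine ((le_max_left _ _).trans_lt hC1).trans_le ?_
    rwa [le_div_iff₀ (hp x)]
  · intro a ha
    obtain ⟨C, hC1, hC2⟩ := exists_between ha
    have hC0 : 0 < C := (Real.exp_pos _).trans hC1
    filter_upwards [hu t ht C hC1] with x hx
    rw [← real_le_iff _ _ _ _ hC0.le] at hx
    refine lt_of_le_of_lt ?_ hC2
    rwa [div_le_iff₀ (hp x)]

/-- truncated convolution -/
lemma trunc_tend {m : Measure ℝ} [IsProbabilityMeasure m] {γ : ℝ} (hγ : 0 ≤ γ) (h : LLc m γ)
    (A : ℝ) :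
    Tendsto (fun x => (m.prod m).real {p | x < p.1 + p.2 ∧ p.1 ≤ A} / m.real (Ioi x)) atTop
      (nhds (∫ y in Iic A, Real.exp (γ * y) ∂m)) := by
  have key : ∀ x, (m.prod m).real {p | x < p.1 + p.2 ∧ p.1 ≤ A} / m.real (Ioi x)
      = ∫ y in Iic A, m.real (Ioi (x - y)) / m.real (Ioi x) ∂m := by
    intro x
    rw [integral_div]
    congr 1
    have hs : MeasurableSet {p : ℝ × ℝ | x < p.1 + p.2 ∧ p.1 ≤ A} := by measurability
    rw [Measure.real, Measure.prod_apply hs, integral_eq_lintegral_of_nonneg_ae]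
    · congr 1
      rw [← lintegral_indicator measurableSet_Iic]
      apply lintegral_congr
      intro y
      by_cases hy : y ≤ A
      · simp only [indicator, mem_Iic, hy, if_true]
        rw [ofReal_measureReal]
        congr 1
        ext z
        simp [hy, sub_lt_iff_lt_add']
      · simp [indicator, hy]
    · exact ae_of_all _ fun y => measureReal_nonneg
    · apply Measurable.aestronglyMeasurable
      have : Monotone fun y => m.real (Ioi (x - y)) := by
        intro a b hab
        refine measureReal_mono (Ioi_subset_Ioi ?_) (measure_ne_top _ _)
        linarith
      exact this.measurable
  simp_rw [key]
  apply tendsto_integral_filter_of_dominated_convergence (fun _ => Real.exp (γ * A) + 1)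
  · refine Eventually.of_forall fun x => ?_
    apply Measurable.aestronglyMeasurable
    have : Monotone fun y => m.real (Ioi (x - y)) := by
      intro a b hab
      refine measureReal_mono (Ioi_subset_Ioi ?_) (measure_ne_top _ _)
      linarith
    exact this.measurable.div_const _
  · filter_upwards [(h.tend A).eventually (gt_mem_nhds (lt_add_one _))] with x hx
    filter_upwards [ae_restrict_mem measurableSet_Iic] with y hy
    rw [Real.norm_of_nonneg (by positivity)]
    refine le_trans ?_ hx.le
    gcongr
    · exact (measure_lt_top _ _).ne
    · exact hy
  · exact integrable_const _
  · exact ae_of_all _ fun y => h.tend y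

lemma conv_split {m : Measure ℝ} [IsProbabilityMeasure m] (A x : ℝ) (hx : 2 * A ≤ x) :
    (m.prod m).real {p | x < p.1 + p.2} =
      2 * (m.prod m).real {p | x < p.1 + p.2 ∧ p.1 ≤ A} + (RRc m A x).toReal := by
  have h1 : (m.prod m).real {p | x < p.1 + p.2 ∧ p.2 ≤ A}
      = (m.prod m).real {p | x < p.1 + p.2 ∧ p.1 ≤ A} := by
    have hs : MeasurableSet {p : ℝ × ℝ | x < p.1 + p.2 ∧ p.1 ≤ A} := by measurability
    have := (Measure.measurePreserving_swap (μ := m) (ν := m)).measureReal_preimage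
      hs.nullMeasurableSet
    rw [← this]
    congr 1
    ext p
    simp [add_comm]
  have h2 : {p : ℝ × ℝ | x < p.1 + p.2} = ({p | x < p.1 + p.2 ∧ p.1 ≤ A} ∪
      {p | x < p.1 + p.2 ∧ p.2 ≤ A}) ∪ {p | x < p.1 + p.2 ∧ A < p.1 ∧ A < p.2} := by
    ext p
    simp only [mem_ofPred_eq, mem_union]
    grind
  rw [h2, measureReal_union, measureReal_union, h1, RRc, ← Measure.real]
  · ring
  · rw [Set.disjoint_left]
    rintro p ⟨h1, h2⟩ ⟨h3, h4⟩
    linarith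
  · measurability
  · rw [Set.disjoint_left]
    rintro p (⟨h1, h2⟩ | ⟨h1, h2⟩) ⟨h3, h4, h5⟩ <;> linarith
  · measurability

lemma cA_tend {m : Measure ℝ} {γ : ℝ} (hi : Integrable (fun y => Real.exp (γ * y)) m) :
    Tendsto (fun A => ∫ y in Iic A, Real.exp (γ * y) ∂m) atTop
      (nhds (∫ y, Real.exp (γ * y) ∂m)) := by
  have := tendsto_setIntegral_of_monotone (μ := m) (s := fun A : ℝ => Iic A)
    (f := fun y => Real.exp (γ * y)) (fun _ => measurableSet_Iic)
    (fun a b h => Iic_subset_Iic.2 h) hi.integrableOn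
  have e : (⋃ i : ℝ, Iic i) = univ := iUnion_Iic
  rwa [e, setIntegral_univ] at this

lemma Rsmall_of_conv {m : Measure ℝ} [IsProbabilityMeasure m] {γ : ℝ} (hγ : 0 ≤ γ)
    (h : LLc m γ) (hi : Integrable (fun y => Real.exp (γ * y)) m)
    (hc : Tendsto (fun x => (m.prod m).real {p | x < p.1 + p.2} / m.real (Ioi x)) atTop
      (nhds (2 * ∫ y, Real.exp (γ * y) ∂m))) : RSmall m := by
  intro ε hε
  have h1 := (cA_tend hi).eventually (lt_mem_nhds (sub_lt_self _ (show 0 < ε / 4 by linarith)))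
  obtain ⟨A, hA⟩ := h1.exists
  refine ⟨A, ?_⟩
  have h2 := trunc_tend hγ h A
  have h3 := hc.sub (h2.const_mul 2)
  filter_upwards [h3.eventually (gt_mem_nhds (show _ < ε by linarith)),
    eventually_ge_atTop (2 * A)] with x hx hx2
  rw [conv_split A x hx2] at hx
  have hp := h.real_pos x
  have hx' : (RRc m A x).toReal / m.real (Ioi x) < ε := by
    refine lt_of_eq_of_lt ?_ hx
    ring
  rw [div_lt_iff₀ hp] at hx'
  exact (real_le_iff _ _ _ _ hε.le).1 hx'.le

lemma conv_of_Rsmall {m : Measure ℝ} [IsProbabilityMeasure m] {γ : ℝ} (hγ : 0 ≤ γ)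
    (h : LLc m γ) (hi : Integrable (fun y => Real.exp (γ * y)) m) (hR : RSmall m) :
    Tendsto (fun x => (m.prod m).real {p | x < p.1 + p.2} / m.real (Ioi x)) atTop
      (nhds (2 * ∫ y, Real.exp (γ * y) ∂m)) := by
  rw [Metric.tendsto_atTop']
  suffices H : ∀ ε > 0, ∀ᶠ x in atTop, dist ((m.prod m).real {p | x < p.1 + p.2} / m.real (Ioi x))
      (2 * ∫ y, Real.exp (γ * y) ∂m) < ε by
    intro ε hε
    obtain ⟨N, hN⟩ := eventually_atTop.1 (H ε hε)
    exact ⟨N, fun n hn => hN n hn.le⟩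
  intro ε hε
  obtain ⟨A0, hA0⟩ := hR (ε / 4) (by linarith)
  have h1 := Metric.tendsto_nhds.1 (cA_tend hi) (ε / 8) (by linarith)
  obtain ⟨A, hA, hAA⟩ := (h1.and (eventually_ge_atTop A0)).exists
  filter_upwards [hA0, Metric.tendsto_nhds.1 (trunc_tend hγ h A) (ε / 8) (by linarith),
    eventually_ge_atTop (2 * A)] with x hx1 hx2 hx3
  rw [conv_split A x hx3]
  have hp := h.real_pos x
  have h4 : RRc m A x ≤ ENNReal.ofReal (ε / 4) * m (Ioi x) := (RRc_anti m hAA x).trans hx1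
  have h5 : (RRc m A x).toReal ≤ ε / 4 * m.real (Ioi x) :=
    (real_le_iff (m.prod m) m _ _ (by linarith)).2 h4
  rw [← div_le_iff₀ hp] at h5
  have h6 : 0 ≤ (RRc m A x).toReal / m.real (Ioi x) := by positivity
  rw [Real.dist_eq, abs_lt] at *
  rw [add_div, mul_div_assoc]
  constructor <;> linarith [hx2.1, hx2.2, hA.1, hA.2]

/-- law of the independent product -/
def HHc (μ ν : Measure ℝ) : Measure ℝ := (μ.prod ν).map (fun p => p.1 * p.2)

lemma meas_mulc : Measurable (fun p : ℝ × ℝ => p.1 * p.2) := measurable_fst.mul measurable_snd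

instance (μ ν : Measure ℝ) [IsProbabilityMeasure μ] [IsProbabilityMeasure ν] :
    IsProbabilityMeasure (HHc μ ν) :=
  Measure.isProbabilityMeasure_map meas_mulc.aemeasurable

lemma meas_tail_div (μ : Measure ℝ) [IsProbabilityMeasure μ] (f : ℝ → ℝ) (hf : Measurable f) :
    Measurable (fun y => μ (Ioi (f y))) := by
  have : Antitone fun y => μ (Ioi y) := fun a b h => measure_mono (Ioi_subset_Ioi h)
  exact this.measurable.comp hf

lemma HHc_apply (μ ν : Measure ℝ) [IsProbabilityMeasure μ] [IsProbabilityMeasure ν]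
    (hν : ∀ᵐ y ∂ν, 0 ≤ y) {x : ℝ} (hx : 0 ≤ x) :
    HHc μ ν (Ioi x) = ∫⁻ y in Ioi 0, μ (Ioi (x / y)) ∂ν := by
  rw [HHc, Measure.map_apply meas_mulc measurableSet_Ioi,
    Measure.prod_apply_symm (meas_mulc measurableSet_Ioi), ← lintegral_indicator measurableSet_Ioi]
  apply lintegral_congr_ae
  filter_upwards [hν] with y hy
  rcases hy.eq_or_lt with h | h
  · subst h
    have e : ((fun u : ℝ => (u, (0:ℝ))) ⁻¹' ((fun p : ℝ × ℝ => p.1 * p.2) ⁻¹' Ioi x)) = ∅ := by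
      ext u
      simp [hx]
    simp [e]
  · simp only [indicator, mem_Ioi, h, if_true]
    congr 1
    ext u
    simp [div_lt_iff₀ h]

lemma HHc_ge (μ ν : Measure ℝ) [IsProbabilityMeasure μ] [IsProbabilityMeasure ν]
    (hν : ∀ᵐ y ∂ν, 0 ≤ y) {x : ℝ} (hx : 0 ≤ x) {s : Set ℝ} (hs : s ⊆ Ioi 0) :
    ∫⁻ y in s, μ (Ioi (x / y)) ∂ν ≤ HHc μ ν (Ioi x) := by
  rw [HHc_apply μ ν hν hx]
  exact lintegral_mono_set hs

lemma HHc_ge' (μ ν : Measure ℝ) [IsProbabilityMeasure μ] [IsProbabilityMeasure ν]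
    (hν : ∀ᵐ y ∂ν, 0 ≤ y) {x y1 : ℝ} (hx : 0 ≤ x) (hy1 : 0 < y1) :
    ν (Ioi y1) * μ (Ioi (x / y1)) ≤ HHc μ ν (Ioi x) := by
  refine le_trans ?_ (HHc_ge μ ν hν hx (s := Ioi y1) (Ioi_subset_Ioi hy1.le))
  rw [mul_comm, ← setLIntegral_const]
  apply setLIntegral_mono' measurableSet_Ioi
  intro y hy
  apply measure_mono
  apply Ioi_subset_Ioi
  exact div_le_div_of_nonneg_left hx hy1 (le_of_lt hy)

lemma HHc_pos (μ ν : Measure ℝ) [IsProbabilityMeasure μ] [IsProbabilityMeasure ν]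
    (hν : ∀ᵐ y ∂ν, 0 ≤ y) {y1 : ℝ} (hy1 : 0 < y1) (hp : 0 < ν (Ioi y1))
    (hμ : ∀ x, 0 < μ (Ioi x)) (x : ℝ) : 0 < HHc μ ν (Ioi x) := by
  have : 0 < HHc μ ν (Ioi (max x 0)) :=
    lt_of_lt_of_le (ENNReal.mul_pos hp.ne' (hμ _).ne') (HHc_ge' μ ν hν (le_max_right x 0) hy1)
  exact this.trans_le (measure_mono (Ioi_subset_Ioi (le_max_left _ _)))

/-- A2 for measures -/
def A2c (ν H : Measure ℝ) : Prop :=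
  ∀ b > 0, ∀ ε > 0, ∀ᶠ x in atTop, ν (Ioi (b * x)) ≤ ENNReal.ofReal ε * H (Ioi x)

lemma exists_gt_pos (ν : Measure ℝ) {y0 : ℝ} (h : 0 < ν (Ioi y0)) :
    ∃ y1 > y0, 0 < ν (Ioi y1) := by
  by_contra! hcon
  have : Ioi y0 = ⋃ n : ℕ, Ioi (y0 + 1 / ((n : ℝ) + 1)) := by
    ext y
    simp only [mem_Ioi, mem_iUnion]
    constructor
    · intro hy
      obtain ⟨n, hn⟩ := exists_nat_one_div_lt (sub_pos.2 hy)
      exact ⟨n, by linarith⟩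
    · rintro ⟨n, hn⟩
      have : (0 : ℝ) < 1 / ((n : ℝ) + 1) := by positivity
      linarith
  rw [this] at h
  refine h.ne' (measure_iUnion_null fun n => ?_)
  have : (0 : ℝ) < 1 / ((n : ℝ) + 1) := by positivity
  exact le_antisymm (hcon _ (by linarith)) bot_le

/-- small `y` part is negligible -/
lemma small_part (μ ν : Measure ℝ) [IsProbabilityMeasure μ] [IsProbabilityMeasure ν]
    (hν : ∀ᵐ y ∂ν, 0 ≤ y) {γ κ : ℝ} (hγ : 0 ≤ γ) (hκ : 0 ≤ κ) (hL : LLc μ γ)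
    (hκ2 : ∀ ε > 0, ∃ y0 > 0, 1 / y0 ≤ κ + ε ∧ 0 < ν (Ioi y0)) {ε : ℝ} (hε : 0 < ε) :
    ∃ y0 > 0, γ / y0 ≤ γ * κ + ε ∧ ∀ t > 0, ∀ᶠ x in atTop,
      ∫⁻ y in Ioc 0 y0, μ (Ioi ((x - t) / y)) ∂ν ≤ ENNReal.ofReal ε * HHc μ ν (Ioi x) := by
  rcases hγ.eq_or_lt with h0 | h0
  · subst h0
    obtain ⟨y1, hy1, -, hp⟩ := hκ2 1 one_pos
    have hlim : Tendsto (fun r : ℝ => ν (Ioc 0 r)) (nhdsWithin 0 (Ioi 0)) (nhds 0) := by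
      have := tendsto_measure_biInter_gt (μ := ν) (s := fun r : ℝ => Ioc 0 r) (a := 0)
        (fun r _ => measurableSet_Ioc.nullMeasurableSet)
        (fun i j _ hij => Ioc_subset_Ioc_right hij) ⟨1, one_pos, measure_ne_top _ _⟩
      have e : (⋂ r : ℝ, ⋂ (_ : r > 0), Ioc (0:ℝ) r) = ∅ := by
        ext y
        simp only [mem_iInter, mem_Ioc, mem_empty_iff_false, iff_false]
        intro h
        have h1 := (h 1 one_pos).1
        have h2 := (h (y / 2) (by linarith)).2
        linarith
      rwa [e, measure_empty] at this
    have hpos : 0 < ENNReal.ofReal ε * ν (Ioi y1) :=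
      ENNReal.mul_pos (ENNReal.ofReal_pos.2 hε).ne' hp.ne'
    have hev := hlim.eventually (gt_mem_nhds hpos)
    have hev2 : ∀ᶠ r : ℝ in nhdsWithin 0 (Ioi 0), r ∈ Ioo 0 (y1 / 2) :=
      Ioo_mem_nhdsGT (by linarith)
    obtain ⟨y0, hy0, hy0'⟩ := (hev.and hev2).exists
    refine ⟨y0, hy0'.1, by simp [hε.le], fun t ht => ?_⟩
    filter_upwards [eventually_ge_atTop (2 * t)] with x hx
    have hx0 : 0 ≤ x := by linarith
    calc ∫⁻ y in Ioc 0 y0, μ (Ioi ((x - t) / y)) ∂ν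
        ≤ ∫⁻ y in Ioc 0 y0, μ (Ioi (x / y1)) ∂ν := by
          apply setLIntegral_mono' measurableSet_Ioc
          intro y hy
          apply measure_mono
          apply Ioi_subset_Ioi
          rw [div_le_div_iff₀ hy1 hy.1]
          have := hy.2
          have := hy0'.2
          nlinarith
      _ = μ (Ioi (x / y1)) * ν (Ioc 0 y0) := by rw [setLIntegral_const]
      _ ≤ μ (Ioi (x / y1)) * (ENNReal.ofReal ε * ν (Ioi y1)) := by gcongr
      _ = ENNReal.ofReal ε * (ν (Ioi y1) * μ (Ioi (x / y1))) := by ring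
      _ ≤ _ := by gcongr; exact HHc_ge' μ ν hν hx0 hy1
  · obtain ⟨y0, hy0, hy, hp⟩ := hκ2 (ε / γ) (by positivity)
    obtain ⟨y1, hy1, hp1⟩ := exists_gt_pos ν hp
    have hy10 : 0 < y1 := hy0.trans hy1
    refine ⟨y0, hy0, ?_, fun t ht => ?_⟩
    · have : γ * (1 / y0) ≤ γ * (κ + ε / γ) := by gcongr
      calc γ / y0 = γ * (1 / y0) := by ring
        _ ≤ _ := this
        _ = _ := by field_simp
    · have hq : 0 < ε * ν.real (Ioi y1) :=
        mul_pos hε (ENNReal.toReal_pos hp1.ne' (measure_ne_top _ _))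
      obtain ⟨s, hs⟩ : ∃ s : ℝ, Real.exp (γ * (-s)) < ε * ν.real (Ioi y1) := by
        have : Tendsto (fun s : ℝ => Real.exp (γ * (-s))) atTop (nhds 0) := by
          apply Real.tendsto_exp_atBot.comp
          exact tendsto_neg_atTop_atBot.const_mul_atBot h0
        exact (this.eventually (gt_mem_nhds hq)).exists
      have h1 := hL.up hs
      have hd : Tendsto (fun x : ℝ => x / y1) atTop atTop := tendsto_id.atTop_div_const hy10
      have h2 := hd.eventually h1
      have h3 : Tendsto (fun x : ℝ => (1 / y0 - 1 / y1) * x) atTop atTop :=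
        tendsto_id.const_mul_atTop (sub_pos.2 (one_div_lt_one_div_of_lt hy0 hy1))
      filter_upwards [h2, h3.eventually_ge_atTop (s + t / y0), eventually_ge_atTop t] with x hx hx3 hxt
      have hx0 : 0 ≤ x := by linarith
      have hxx : x / y1 - (-s) ≤ (x - t) / y0 := by
        have e1 : (x - t) / y0 = x * (1 / y0) - t / y0 := by ring
        have e2 : x / y1 = x * (1 / y1) := by ring
        rw [e1, e2]
        linarith
      calc ∫⁻ y in Ioc 0 y0, μ (Ioi ((x - t) / y)) ∂ν
          ≤ ∫⁻ y in Ioc 0 y0, μ (Ioi (x / y1 - (-s))) ∂ν := by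
            apply setLIntegral_mono' measurableSet_Ioc
            intro y hy
            apply measure_mono
            apply Ioi_subset_Ioi
            refine hxx.trans ?_
            exact div_le_div_of_nonneg_left (by linarith) hy.1 hy.2
        _ = μ (Ioi (x / y1 - (-s))) * ν (Ioc 0 y0) := by rw [setLIntegral_const]
        _ ≤ (ENNReal.ofReal (ε * ν.real (Ioi y1)) * μ (Ioi (x / y1))) * 1 := by
            gcongr
            exact prob_le_one
        _ = ENNReal.ofReal ε * (ν (Ioi y1) * μ (Ioi (x / y1))) := by
            rw [ENNReal.ofReal_mul hε.le, ofReal_measureReal]; ring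
        _ ≤ _ := by gcongr; exact HHc_ge' μ ν hν hx0 hy10

lemma enn_arith {h i : ENNReal} {C D ε : ℝ} (hfin : h ≠ ⊤) (hifin : i ≠ ⊤) (hC0 : 0 < C)
    (hDp : 0 < D) (hε : 0 < ε) (hε2 : C ≤ D * (1 - (ε + ε)))
    (htot : h ≤ (ENNReal.ofReal ε * h + i) + ENNReal.ofReal ε * h) :
    ENNReal.ofReal C * h ≤ ENNReal.ofReal D * i := by
  lift h to NNReal using hfin
  lift i to NNReal using hifin
  simp only [ENNReal.ofReal] at *
  norm_cast at htot ⊢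
  rw [← NNReal.coe_le_coe] at *
  push_cast [Real.coe_toNNReal, hC0.le, hDp.le, hε.le] at *
  have hh0 : (0:ℝ) ≤ h := h.2
  calc C * (h:ℝ) ≤ D * (1 - (ε + ε)) * h := by gcongr
    _ = D * (h - (ε * h + ε * h)) := by ring
    _ ≤ D * i := by gcongr; linarith

lemma HHc_L (μ ν : Measure ℝ) [IsProbabilityMeasure μ] [IsProbabilityMeasure ν]
    (hν : ∀ᵐ y ∂ν, 0 ≤ y) {γ κ : ℝ} (hγ : 0 ≤ γ) (hκ : 0 ≤ κ) (hL : LLc μ γ)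
    (hκ1 : ∀ᵐ y ∂ν, κ * y ≤ 1)
    (hκ2 : ∀ ε > 0, ∃ y0 > 0, 1 / y0 ≤ κ + ε ∧ 0 < ν (Ioi y0))
    (hA2 : A2c ν (HHc μ ν)) : LLc (HHc μ ν) (γ * κ) := by
  have hA2' : ∀ z > 0, ∀ ε > 0, ∀ᶠ x in atTop,
      ν (Ioi (x / z)) ≤ ENNReal.ofReal ε * HHc μ ν (Ioi x) := by
    intro z hz ε hε
    have := hA2 (1 / z) (by positivity) ε hε
    simpa [div_eq_inv_mul] using this
  refine LLc.mk' ?_ ?_ ?_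
  · obtain ⟨y1, hy1, -, hp⟩ := hκ2 1 one_pos
    exact HHc_pos μ ν hν hy1 hp hL.1
  · intro t ht C hC
    obtain ⟨D, hD1, hD2⟩ := exists_between hC
    obtain ⟨ε, hε, hε1, hε2⟩ : ∃ ε > 0, Real.exp ((γ * κ + ε) * t) < D ∧ ε + D + ε ≤ C := by
      have hc : Tendsto (fun ε : ℝ => Real.exp ((γ * κ + ε) * t)) (nhdsWithin 0 (Ioi 0))
          (nhds (Real.exp (γ * κ * t))) := by
        have : Continuous (fun ε : ℝ => Real.exp ((γ * κ + ε) * t)) := by fun_prop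
        have h := this.tendsto 0
        simp only [add_zero] at h
        exact h.mono_left nhdsWithin_le_nhds
      have hev2 : ∀ᶠ r : ℝ in nhdsWithin 0 (Ioi 0), r ∈ Ioo 0 ((C - D) / 2) :=
        Ioo_mem_nhdsGT (by linarith)
      obtain ⟨ε, h1, h2⟩ := ((hc.eventually (gt_mem_nhds hD1)).and hev2).exists
      exact ⟨ε, h2.1, h1, by linarith [h2.2]⟩
    have hDp : 0 < D := (Real.exp_pos _).trans hD1
    obtain ⟨y0, hy0, hy0e, hsm⟩ := small_part μ ν hν hγ hκ hL hκ2 hε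
    have hup : ∀ᶠ z in atTop, μ (Ioi (z - t / y0)) ≤ ENNReal.ofReal D * μ (Ioi z) := by
      apply hL.up
      refine lt_of_le_of_lt ?_ hε1
      apply Real.exp_le_exp.2
      calc γ * (t / y0) = γ / y0 * t := by ring
        _ ≤ _ := by gcongr
    obtain ⟨z, hz⟩ := eventually_atTop.1 (hup.and (eventually_gt_atTop 0))
    have hz0 : 0 < z := (hz z le_rfl).2
    filter_upwards [hsm t ht, hA2' z hz0 ε hε, eventually_ge_atTop t] with x h1 h2 h3
    have hx0 : 0 ≤ x := by linarith
    rw [HHc_apply μ ν hν (by linarith : 0 ≤ x - t)]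
    have hsub : Ioi (0:ℝ) ⊆ (Ioc 0 y0 ∪ (Ioc y0 (x / z))) ∪ Ioi (x / z) := by
      intro y hy
      simp only [mem_union, mem_Ioc, mem_Ioi] at *
      grind
    have hmid : ∫⁻ y in Ioc y0 (x / z), μ (Ioi ((x - t) / y)) ∂ν
        ≤ ENNReal.ofReal D * HHc μ ν (Ioi x) := by
      calc ∫⁻ y in Ioc y0 (x / z), μ (Ioi ((x - t) / y)) ∂ν
          ≤ ∫⁻ y in Ioc y0 (x / z), ENNReal.ofReal D * μ (Ioi (x / y)) ∂ν := by
            apply setLIntegral_mono' measurableSet_Ioc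
            intro y hy
            have hyp : 0 < y := hy0.trans hy.1
            have hzy : z ≤ x / y := by
              rw [le_div_iff₀ hyp]
              have := (le_div_iff₀ hz0).1 hy.2
              linarith
            refine le_trans (measure_mono (Ioi_subset_Ioi ?_)) (hz _ hzy).1
            rw [sub_div]
            have := div_le_div_of_nonneg_left ht.le hy0 hy.1.le
            linarith
        _ = ENNReal.ofReal D * ∫⁻ y in Ioc y0 (x / z), μ (Ioi (x / y)) ∂ν :=
            lintegral_const_mul _ (meas_tail_div μ _ (measurable_const.div measurable_id))
        _ ≤ _ := by
            gcongr
            refine HHc_ge μ ν hν hx0 ?_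
            intro y hy
            exact hy0.trans hy.1
    have hbig : ∫⁻ y in Ioi (x / z), μ (Ioi ((x - t) / y)) ∂ν ≤ ν (Ioi (x / z)) := by
      calc _ ≤ ∫⁻ y in Ioi (x / z), 1 ∂ν := lintegral_mono fun y => prob_le_one
        _ = _ := by simp
    calc ∫⁻ y in Ioi 0, μ (Ioi ((x - t) / y)) ∂ν
        ≤ ∫⁻ y in (Ioc 0 y0 ∪ (Ioc y0 (x / z))) ∪ Ioi (x / z), μ (Ioi ((x - t) / y)) ∂ν :=
          lintegral_mono_set hsub
      _ ≤ _ := lintegral_union_le _ _ _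
      _ ≤ (∫⁻ y in Ioc 0 y0, μ (Ioi ((x - t) / y)) ∂ν
          + ∫⁻ y in Ioc y0 (x / z), μ (Ioi ((x - t) / y)) ∂ν)
          + ∫⁻ y in Ioi (x / z), μ (Ioi ((x - t) / y)) ∂ν := by
          gcongr
          exact lintegral_union_le _ _ _
      _ ≤ (ENNReal.ofReal ε * HHc μ ν (Ioi x) + ENNReal.ofReal D * HHc μ ν (Ioi x))
          + ENNReal.ofReal ε * HHc μ ν (Ioi x) := by
          gcongr
          exact hbig.trans h2
      _ = ENNReal.ofReal (ε + D + ε) * HHc μ ν (Ioi x) := by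
          rw [ENNReal.ofReal_add (by positivity) hε.le, ENNReal.ofReal_add hε.le hDp.le]; ring
      _ ≤ _ := by gcongr
  · intro t ht C hC0 hC
    obtain ⟨D, hD1, hD2⟩ := exists_between hC
    have hDp : 0 < D := hC0.trans hD1
    obtain ⟨ε, hε, hε2⟩ : ∃ ε > 0, C ≤ D * (1 - (ε + ε)) := by
      refine ⟨(D - C) / (2 * D), div_pos (by linarith) (by positivity), le_of_eq ?_⟩
      field_simp
      ring
    obtain ⟨y0, hy0, hy0e, hsm⟩ := small_part μ ν hν hγ hκ hL hκ2 hε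
    have hlow : ∀ᶠ z in atTop, ENNReal.ofReal D * μ (Ioi z) ≤ μ (Ioi (z - t * κ)) := by
      apply hL.low
      rwa [show γ * (t * κ) = γ * κ * t by ring]
    obtain ⟨z, hz⟩ := eventually_atTop.1 (hlow.and (eventually_gt_atTop 0))
    have hz0 : 0 < z := (hz z le_rfl).2
    filter_upwards [hsm t ht, hA2' z hz0 ε hε, eventually_ge_atTop t] with x h1 h2 h3
    have hx0 : 0 ≤ x := by linarith
    have hsub : Ioi (0:ℝ) ⊆ (Ioc 0 y0 ∪ (Ioc y0 (x / z))) ∪ Ioi (x / z) := by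
      intro y hy
      simp only [mem_union, mem_Ioc, mem_Ioi] at *
      grind
    have hmid : ENNReal.ofReal D * ∫⁻ y in Ioc y0 (x / z), μ (Ioi (x / y)) ∂ν
        ≤ HHc μ ν (Ioi (x - t)) := by
      rw [← lintegral_const_mul _ (meas_tail_div μ (fun y => x / y)
        (measurable_const.div measurable_id))]
      calc _ ≤ ∫⁻ y in Ioc y0 (x / z), μ (Ioi ((x - t) / y)) ∂ν := by
            apply lintegral_mono_ae
            filter_upwards [ae_restrict_mem measurableSet_Ioc, ae_restrict_of_ae hκ1] with y hy hyk
            have hyp : 0 < y := hy0.trans hy.1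
            have hzy : z ≤ x / y := by
              rw [le_div_iff₀ hyp]
              have := (le_div_iff₀ hz0).1 hy.2
              linarith
            refine le_trans (hz _ hzy).1 (measure_mono (Ioi_subset_Ioi ?_))
            rw [sub_div]
            have : t * κ ≤ t / y := by
              rw [le_div_iff₀ hyp]
              nlinarith
            linarith
        _ ≤ _ := by
            refine HHc_ge μ ν hν (by linarith) ?_
            intro y hy
            exact hy0.trans hy.1
    have hbig : ∫⁻ y in Ioi (x / z), μ (Ioi (x / y)) ∂ν ≤ ν (Ioi (x / z)) := by
      calc _ ≤ ∫⁻ y in Ioi (x / z), 1 ∂ν := lintegral_mono fun y => prob_le_one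
        _ = _ := by simp
    have hsm' : ∫⁻ y in Ioc 0 y0, μ (Ioi (x / y)) ∂ν ≤ ENNReal.ofReal ε * HHc μ ν (Ioi x) := by
      refine le_trans ?_ h1
      apply setLIntegral_mono' measurableSet_Ioc
      intro y hy
      refine measure_mono (Ioi_subset_Ioi ?_)
      exact div_le_div_of_nonneg_right (by linarith) hy.1.le
    set h : ENNReal := HHc μ ν (Ioi x) with hh
    set i : ENNReal := ∫⁻ y in Ioc y0 (x / z), μ (Ioi (x / y)) ∂ν with hi
    have hfin : h ≠ ⊤ := measure_ne_top _ _
    have htot : h ≤ (ENNReal.ofReal ε * h + i) + ENNReal.ofReal ε * h := by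
      calc h = ∫⁻ y in Ioi 0, μ (Ioi (x / y)) ∂ν := HHc_apply μ ν hν hx0
        _ ≤ ∫⁻ y in (Ioc 0 y0 ∪ (Ioc y0 (x / z))) ∪ Ioi (x / z), μ (Ioi (x / y)) ∂ν :=
          lintegral_mono_set hsub
        _ ≤ _ := lintegral_union_le _ _ _
        _ ≤ (∫⁻ y in Ioc 0 y0, μ (Ioi (x / y)) ∂ν + i)
          + ∫⁻ y in Ioi (x / z), μ (Ioi (x / y)) ∂ν := by
          gcongr
          exact lintegral_union_le _ _ _
        _ ≤ _ := by
          gcongr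
          exact hbig.trans h2
    refine le_trans ?_ hmid
    have hifin : i ≠ ⊤ := by
      refine ne_top_of_le_ne_top hfin (HHc_ge μ ν hν hx0 ?_)
      intro y hy
      exact hy0.trans hy.1
    exact enn_arith hfin hifin hC0 hDp hε hε2 htot

abbrev Q4c (μ ν : Measure ℝ) : Measure ((ℝ × ℝ) × (ℝ × ℝ)) := (μ.prod ν).prod (μ.prod ν)

def E4c (A x : ℝ) : Set ((ℝ × ℝ) × (ℝ × ℝ)) :=
  {q | x < q.1.1 * q.1.2 + q.2.1 * q.2.2 ∧ A < q.1.1 * q.1.2 ∧ A < q.2.1 * q.2.2}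

lemma E4c_meas (A x : ℝ) : MeasurableSet (E4c A x) := by
  unfold E4c
  measurability

lemma RRc_HHc (μ ν : Measure ℝ) [IsProbabilityMeasure μ] [IsProbabilityMeasure ν] (A x : ℝ) :
    RRc (HHc μ ν) A x = Q4c μ ν (E4c A x) := by
  unfold RRc HHc
  rw [Measure.map_prod_map _ _ meas_mulc meas_mulc, Measure.map_apply]
  · rfl
  · exact meas_mulc.prodMap meas_mulc
  · measurability

/-- part a : both X's exceed `a` -/
lemma part_a (μ ν : Measure ℝ) [IsProbabilityMeasure μ] [IsProbabilityMeasure ν]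
    (hν : ∀ᵐ y ∂ν, 0 ≤ y) {a x B ε : ℝ} (hx : 0 ≤ x)
    (hR : ∀ y ∈ Ioc 0 B, RRc μ a (x / y) ≤ ENNReal.ofReal ε * μ (Ioi (x / y))) :
    Q4c μ ν {q | x / q.1.2 < q.1.1 + q.2.1 ∧ a < q.1.1 ∧ a < q.2.1 ∧ 0 < q.1.2 ∧ q.1.2 ≤ B}
      ≤ ENNReal.ofReal ε * HHc μ ν (Ioi x) := by
  have h1 : MeasurePreserving (Prod.map Prod.swap Prod.fst : (ℝ × ℝ) × (ℝ × ℝ) → (ℝ × ℝ) × ℝ)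
      (Q4c μ ν) ((ν.prod μ).prod μ) :=
    (Measure.measurePreserving_swap (μ := μ) (ν := ν)).prod measurePreserving_fst
  have h2 := (measurePreserving_prodAssoc ν μ μ).comp h1
  have hs : MeasurableSet {r : ℝ × (ℝ × ℝ) | x / r.1 < r.2.1 + r.2.2 ∧ a < r.2.1 ∧ a < r.2.2 ∧
      0 < r.1 ∧ r.1 ≤ B} := by
    have : Measurable fun r : ℝ × (ℝ × ℝ) => x / r.1 := measurable_const.div measurable_fst
    measurability
  have h3 := h2.measure_preimage hs.nullMeasurableSet
  have e : {q : (ℝ × ℝ) × (ℝ × ℝ) |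
      x / q.1.2 < q.1.1 + q.2.1 ∧ a < q.1.1 ∧ a < q.2.1 ∧ 0 < q.1.2 ∧ q.1.2 ≤ B} =
      (⇑MeasurableEquiv.prodAssoc ∘ Prod.map Prod.swap Prod.fst) ⁻¹'
      {r : ℝ × (ℝ × ℝ) | x / r.1 < r.2.1 + r.2.2 ∧ a < r.2.1 ∧ a < r.2.2 ∧
      0 < r.1 ∧ r.1 ≤ B} := by
    ext q; rfl
  rw [e, h3, Measure.prod_apply hs]
  calc _ ≤ ∫⁻ y, (Ioc 0 B).indicator (fun y => ENNReal.ofReal ε * μ (Ioi (x / y))) y ∂ν := by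
        apply lintegral_mono
        intro y
        by_cases hy : y ∈ Ioc 0 B
        · rw [indicator_of_mem hy]
          refine le_trans (measure_mono ?_) (hR y hy)
          rintro p ⟨h1, h2, h3, -⟩
          exact ⟨h1, h2, h3⟩
        · rw [indicator_of_notMem hy]
          refine le_of_eq ?_
          convert measure_empty (μ := μ.prod μ)
          ext p
          simp only [mem_preimage, mem_ofPred_eq, mem_empty_iff_false, iff_false]
          rintro ⟨-, -, -, h4, h5⟩
          exact hy ⟨h4, h5⟩
    _ = ENNReal.ofReal ε * ∫⁻ y in Ioc 0 B, μ (Ioi (x / y)) ∂ν := by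
        rw [lintegral_indicator measurableSet_Ioc, lintegral_const_mul _ (meas_tail_div μ
          (fun y => x / y) (measurable_const.div measurable_id))]
    _ ≤ _ := by
        gcongr
        exact HHc_ge μ ν hν hx fun y hy => hy.1

lemma part_b (μ ν : Measure ℝ) [IsProbabilityMeasure μ] [IsProbabilityMeasure ν]
    (hν : ∀ᵐ y ∂ν, 0 ≤ y) {a x B D C : ℝ} (hx : 0 ≤ x)
    (hR : ∀ y ∈ Ioc 0 B, μ (Ioi (x / y - a)) ≤ ENNReal.ofReal C * μ (Ioi (x / y))) :
    Q4c μ ν {q | x / q.1.2 - a < q.1.1 ∧ D < q.2.2 ∧ 0 < q.1.2 ∧ q.1.2 ≤ B}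
      ≤ ν (Ioi D) * (ENNReal.ofReal C * HHc μ ν (Ioi x)) := by
  have e : {q : (ℝ × ℝ) × (ℝ × ℝ) | x / q.1.2 - a < q.1.1 ∧ D < q.2.2 ∧ 0 < q.1.2 ∧ q.1.2 ≤ B} =
      {p : ℝ × ℝ | x / p.2 - a < p.1 ∧ 0 < p.2 ∧ p.2 ≤ B} ×ˢ ((univ : Set ℝ) ×ˢ Ioi D) := by
    ext q
    simp only [mem_ofPred_eq, mem_prod, mem_univ, mem_Ioi, true_and]
    tauto
  have hs : MeasurableSet {p : ℝ × ℝ | x / p.2 - a < p.1 ∧ 0 < p.2 ∧ p.2 ≤ B} := by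
    have : Measurable fun r : (ℝ × ℝ) => x / r.2 - a :=
      (measurable_const.div measurable_snd).sub_const _
    measurability
  rw [e, Measure.prod_prod, Measure.prod_prod, measure_univ, one_mul, mul_comm]
  gcongr
  rw [Measure.prod_apply_symm hs]
  calc _ ≤ ∫⁻ y, (Ioc 0 B).indicator (fun y => ENNReal.ofReal C * μ (Ioi (x / y))) y ∂ν := by
        apply lintegral_mono
        intro y
        by_cases hy : y ∈ Ioc 0 B
        · rw [indicator_of_mem hy]
          refine le_trans (measure_mono ?_) (hR y hy)
          rintro p ⟨h1, h2, h3⟩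
          exact h1
        · rw [indicator_of_notMem hy]
          refine le_of_eq ?_
          convert measure_empty (μ := μ)
          ext p
          simp only [mem_preimage, mem_ofPred_eq, mem_empty_iff_false, iff_false]
          rintro ⟨-, h4, h5⟩
          exact hy ⟨h4, h5⟩
    _ = ENNReal.ofReal C * ∫⁻ y in Ioc 0 B, μ (Ioi (x / y)) ∂ν := by
        rw [lintegral_indicator measurableSet_Ioc, lintegral_const_mul _ (meas_tail_div μ
          (fun y => x / y) (measurable_const.div measurable_id))]
    _ ≤ _ := by
        gcongr
        exact HHc_ge μ ν hν hx fun y hy => hy.1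

lemma meas_Rset (A x : ℝ) : MeasurableSet {p : ℝ × ℝ | x < p.1 + p.2 ∧ A < p.1 ∧ A < p.2} := by
  measurability

lemma part_c (μ ν : Measure ℝ) [IsProbabilityMeasure μ] [IsProbabilityMeasure ν]
    {a A x : ℝ} (ha : 0 < a) {η : ℝ}
    (hA : ∀ v, A ≤ v → ν (Ioi (v / a)) ≤ ENNReal.ofReal η * HHc μ ν (Ioi v)) :
    Q4c μ ν {q | x < a * q.1.2 + q.2.1 * q.2.2 ∧ A < a * q.1.2 ∧ A < q.2.1 * q.2.2}
      ≤ ENNReal.ofReal η * RRc (HHc μ ν) A x := by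
  have h1 : MeasurePreserving (fun p : ℝ × ℝ => p.1 * p.2) (μ.prod ν) (HHc μ ν) :=
    ⟨meas_mulc, rfl⟩
  have h2 := (measurePreserving_snd (μ := μ) (ν := ν)).prod h1
  have hs : MeasurableSet {r : ℝ × ℝ | x < a * r.1 + r.2 ∧ A < a * r.1 ∧ A < r.2} := by
    measurability
  have h3 := h2.measure_preimage hs.nullMeasurableSet
  have e : {q : (ℝ × ℝ) × (ℝ × ℝ) |
      x < a * q.1.2 + q.2.1 * q.2.2 ∧ A < a * q.1.2 ∧ A < q.2.1 * q.2.2} =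
      (Prod.map Prod.snd (fun p : ℝ × ℝ => p.1 * p.2)) ⁻¹'
      {r : ℝ × ℝ | x < a * r.1 + r.2 ∧ A < a * r.1 ∧ A < r.2} := by
    ext q; rfl
  have hs2 : MeasurableSet {p : ℝ × ℝ | x < p.1 + p.2 ∧ A < p.1 ∧ A < p.2} := meas_Rset A x
  rw [e, h3, RRc, Measure.prod_apply_symm hs, Measure.prod_apply_symm hs2,
    ← lintegral_const_mul _ (measurable_measure_prodMk_right hs2)]
  apply lintegral_mono
  intro s
  by_cases hsA : A < s
  · have e1 : ((fun y => (y, s)) ⁻¹' {r : ℝ × ℝ | x < a * r.1 + r.2 ∧ A < a * r.1 ∧ A < r.2})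
        = Ioi (max A (x - s) / a) := by
      ext y
      simp only [mem_preimage, mem_ofPred_eq, mem_Ioi, div_lt_iff₀ ha, max_lt_iff]
      constructor
      · rintro ⟨h1, h2, -⟩; constructor <;> linarith
      · rintro ⟨h1, h2⟩; refine ⟨?_, ?_, hsA⟩ <;> linarith
    have e2 : ((fun y => (y, s)) ⁻¹' {p : ℝ × ℝ | x < p.1 + p.2 ∧ A < p.1 ∧ A < p.2})
        = Ioi (max A (x - s)) := by
      ext y
      simp only [mem_preimage, mem_ofPred_eq, mem_Ioi, max_lt_iff]
      constructor
      · rintro ⟨h1, h2, -⟩; constructor <;> linarith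
      · rintro ⟨h1, h2⟩; refine ⟨?_, ?_, hsA⟩ <;> linarith
    simp only [e1, e2]
    exact hA _ (le_max_left _ _)
  · refine le_trans (le_of_eq ?_) zero_le
    convert measure_empty (μ := ν)
    ext p
    simp only [mem_preimage, mem_ofPred_eq, mem_empty_iff_false, iff_false]
    rintro ⟨-, -, h4⟩
    exact hsA h4

lemma HHc_RSmall (μ ν : Measure ℝ) [IsProbabilityMeasure μ] [IsProbabilityMeasure ν]
    (hν : ∀ᵐ y ∂ν, 0 ≤ y) {γ : ℝ} (hL : LLc μ γ) (hR : RSmall μ)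
    (hA2 : A2c ν (HHc μ ν)) : RSmall (HHc μ ν) := by
  have hA2' : ∀ z > 0, ∀ ε > 0, ∀ᶠ x in atTop,
      ν (Ioi (x / z)) ≤ ENNReal.ofReal ε * HHc μ ν (Ioi x) := by
    intro z hz ε hε
    have := hA2 (1 / z) (by positivity) ε hε
    simpa [div_eq_inv_mul] using this
  intro ε0 hε0
  set ε := ε0 / 12 with hεdef
  have hε : 0 < ε := by positivity
  obtain ⟨a0, ha0⟩ := hR ε hε
  set a := max a0 1 with hadef
  have ha : 0 < a := lt_of_lt_of_le one_pos (le_max_right _ _)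
  set C := Real.exp (γ * a) + 1 with hCdef
  have hC : 0 < C := by positivity
  have hup := hL.up (show Real.exp (γ * a) < C by linarith)
  obtain ⟨z, hz⟩ := eventually_atTop.1 (ha0.and (hup.and (eventually_gt_atTop 0)))
  have hz0 : 0 < z := (hz z le_rfl).2.2
  have hlim : Tendsto (fun A : ℝ => ν (Ioi (A / a))) atTop (nhds 0) := by
    have h1 := tendsto_measure_iInter_atTop (μ := ν) (s := fun r : ℝ => Ioi r)
      (fun r => measurableSet_Ioi.nullMeasurableSet)
      (fun i j hij => Ioi_subset_Ioi hij) ⟨0, measure_ne_top _ _⟩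
    have e : (⋂ r : ℝ, Ioi r) = ∅ := by
      ext y
      simp only [mem_iInter, mem_Ioi, mem_empty_iff_false, iff_false]
      intro h
      exact lt_irrefl _ (h y)
    rw [e, measure_empty] at h1
    exact h1.comp (tendsto_id.atTop_div_const ha)
  have hpos : 0 < ENNReal.ofReal (ε / C) := ENNReal.ofReal_pos.2 (by positivity)
  obtain ⟨A1, hA1⟩ := eventually_atTop.1 (hA2' a ha (1/4) (by norm_num))
  obtain ⟨A, hA, hAA1, hA0⟩ := ((hlim.eventually (gt_mem_nhds hpos)).and
    ((eventually_ge_atTop A1).and (eventually_gt_atTop 0))).exists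
  refine ⟨A, ?_⟩
  filter_upwards [hA2' z hz0 ε hε, eventually_ge_atTop 0] with x hx1 hx0
  have hzy : ∀ y ∈ Ioc 0 (x / z), z ≤ x / y := by
    intro y hy
    rw [le_div_iff₀ hy.1]
    have := (le_div_iff₀ hz0).1 hy.2
    linarith
  have hpa := part_a μ ν hν (a := a) (B := x / z) (ε := ε) hx0
    (fun y hy => (RRc_anti μ (le_max_left _ _) _).trans (hz _ (hzy y hy)).1)
  have hpb := part_b μ ν hν (a := a) (B := x / z) (C := C) (D := A / a) hx0
    (fun y hy => (hz _ (hzy y hy)).2.1)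
  have hpc := part_c μ ν (a := a) (A := A) (x := x) ha (η := 1/4)
    (fun v hv => hA1 v (hAA1.trans hv))
  have hpd : Q4c μ ν {q | x / z < q.1.2} ≤ ENNReal.ofReal ε * HHc μ ν (Ioi x) := by
    have e : {q : (ℝ × ℝ) × (ℝ × ℝ) | x / z < q.1.2} = (univ ×ˢ Ioi (x / z)) ×ˢ univ := by
      ext q; simp
    rw [e, Measure.prod_prod, Measure.prod_prod]
    simpa using hx1
  have hnn : ∀ᵐ q ∂(Q4c μ ν), 0 ≤ q.1.2 ∧ 0 ≤ q.2.2 := by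
    have h1 : MeasurePreserving (fun q : (ℝ × ℝ) × (ℝ × ℝ) => q.1.2) (Q4c μ ν) ν :=
      measurePreserving_snd.comp measurePreserving_fst
    have h2 : MeasurePreserving (fun q : (ℝ × ℝ) × (ℝ × ℝ) => q.2.2) (Q4c μ ν) ν :=
      measurePreserving_snd.comp measurePreserving_snd
    exact (h1.quasiMeasurePreserving.ae hν).and (h2.quasiMeasurePreserving.ae hν)
  have hhalf : Q4c μ ν (E4c A x ∩ {q | q.2.2 ≤ q.1.2}) ≤
      ENNReal.ofReal ε * HHc μ ν (Ioi x) + ENNReal.ofReal ε * HHc μ ν (Ioi x)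
      + ENNReal.ofReal ε * HHc μ ν (Ioi x) + ENNReal.ofReal (1/4) * RRc (HHc μ ν) A x := by
    have hb' : ν (Ioi (A / a)) * (ENNReal.ofReal C * HHc μ ν (Ioi x)) ≤
        ENNReal.ofReal ε * HHc μ ν (Ioi x) := by
      calc _ ≤ ENNReal.ofReal (ε / C) * (ENNReal.ofReal C * HHc μ ν (Ioi x)) := by gcongr
        _ = _ := by
          rw [← mul_assoc, ← ENNReal.ofReal_mul (by positivity), div_mul_cancel₀ _ hC.ne']
    refine le_trans ?_ (add_le_add (add_le_add (add_le_add hpd hpa) (hpb.trans hb')) hpc)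
    refine le_trans (measure_mono_ae ?_) ((measure_union_le _ _).trans (add_le_add_left
      ((measure_union_le _ _).trans (add_le_add_left (measure_union_le _ _) _)) _))
    filter_upwards [hnn] with q hq
    intro hqE
    obtain ⟨⟨h1, h2, h3⟩, h4⟩ := hqE
    change q.2.2 ≤ q.1.2 at h4
    obtain ⟨⟨u1, y1⟩, ⟨u2, y2⟩⟩ := q
    simp only at h1 h2 h3 h4 hq
    have hy1 : 0 < y1 := by
      rcases hq.1.eq_or_lt with h | h
      · subst h; simp at h2; linarith
      · exact h
    have hy2 : 0 < y2 := by
      rcases hq.2.eq_or_lt with h | h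
      · subst h; simp at h3; linarith
      · exact h
    have hu1 : 0 < u1 := by
      by_contra hcon
      nlinarith
    have hu2 : 0 < u2 := by
      by_contra hcon
      nlinarith
    by_cases hd : x / z < y1
    · exact Or.inl (Or.inl (Or.inl hd))
    have hsum : x / y1 < u1 + u2 := by
      rw [div_lt_iff₀ hy1]
      nlinarith
    push Not at hd
    by_cases hca : a < u1
    · by_cases hcb : a < u2
      · exact Or.inl (Or.inl (Or.inr ⟨hsum, hca, hcb, hy1, hd⟩))
      · refine Or.inl (Or.inr ⟨?_, ?_, hy1, hd⟩)
        · simp only; linarith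
        · simp only
          rw [div_lt_iff₀ ha]
          nlinarith
    · refine Or.inr ⟨?_, ?_, h3⟩
      · simp only; nlinarith
      · simp only; nlinarith
  have hsym : Q4c μ ν (E4c A x ∩ {q | q.1.2 ≤ q.2.2}) =
      Q4c μ ν (E4c A x ∩ {q | q.2.2 ≤ q.1.2}) := by
    have hs : MeasurableSet (E4c A x ∩ {q : (ℝ × ℝ) × (ℝ × ℝ) | q.2.2 ≤ q.1.2}) := by
      apply (E4c_meas A x).inter
      measurability
    have := (Measure.measurePreserving_swap (μ := μ.prod ν) (ν := μ.prod ν)).measure_preimage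
      hs.nullMeasurableSet
    rw [← this]
    congr 1
    ext q
    simp only [E4c, mem_inter_iff, mem_ofPred_eq, mem_preimage, Prod.fst_swap, Prod.snd_swap,
      add_comm]
    tauto
  have htot : RRc (HHc μ ν) A x ≤ 2 * (ENNReal.ofReal ε * HHc μ ν (Ioi x)
      + ENNReal.ofReal ε * HHc μ ν (Ioi x)
      + ENNReal.ofReal ε * HHc μ ν (Ioi x) + ENNReal.ofReal (1/4) * RRc (HHc μ ν) A x) := by
    rw [two_mul]
    refine le_trans ?_ (add_le_add hhalf hhalf)
    nth_rewrite 1 [← hsym]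
    rw [RRc_HHc]
    refine le_trans (measure_mono ?_) (measure_union_le _ _)
    intro q hq
    rcases le_total q.1.2 q.2.2 with h | h
    · exact Or.inl ⟨hq, h⟩
    · exact Or.inr ⟨hq, h⟩
  have hRf : RRc (HHc μ ν) A x ≠ ⊤ := measure_ne_top _ _
  have hHf : HHc μ ν (Ioi x) ≠ ⊤ := measure_ne_top _ _
  generalize RRc (HHc μ ν) A x = r at htot hRf
  generalize HHc μ ν (Ioi x) = h at htot hHf
  lift r to NNReal using hRf
  lift h to NNReal using hHf
  simp only [ENNReal.ofReal] at *
  norm_cast at htot ⊢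
  rw [← NNReal.coe_le_coe] at *
  push_cast [Real.coe_toNNReal, hε.le, hε0.le] at *
  norm_num at htot
  have : ε0 * (h:ℝ) = 12 * (ε * h) := by rw [hεdef]; ring
  rw [this]
  linarith

lemma atoms_countable (ν : Measure ℝ) [IsFiniteMeasure ν] : {y : ℝ | ν {y} ≠ 0}.Countable := by
  have := Measure.countable_meas_pos_of_disjoint_iUnion (μ := ν) (As := fun y : ℝ => {y})
    (fun y => measurableSet_singleton y) (fun a b hab => by simpa using hab)
  refine this.mono fun y hy => ?_
  exact pos_iff_ne_zero.2 hy

lemma psi_ae (ν : Measure ℝ) [IsProbabilityMeasure ν] (φ ψ : ℝ → ℝ) (hφ : Integrable φ ν)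
    (hψ : ∀ y, (∀ δ > 0, 0 < ν (Ioo (y - δ) (y + δ))) →
      Tendsto (fun δ : ℝ => (∫ v in Ioc (y - δ) (y + δ), φ v ∂ν) / ν.real (Ioc (y - δ) (y + δ)))
        (nhdsWithin 0 (Ioi 0)) (nhds (ψ y))) : ∀ᵐ y ∂ν, ψ y = φ y := by
  have h1 := (Besicovitch.vitaliFamily ν).ae_tendsto_average hφ.locallyIntegrable
  have h2 := (Besicovitch.vitaliFamily ν).ae_eventually_measure_pos
  filter_upwards [h1, h2] with y hy1 hy2
  have hf := Besicovitch.tendsto_filterAt ν y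
  have hy1' := hy1.comp hf
  have hy2' := hf.eventually hy2
  have hpos : ∀ δ > 0, 0 < ν (Ioo (y - δ) (y + δ)) := by
    intro δ hδ
    have : ∀ᶠ r : ℝ in nhdsWithin 0 (Ioi 0), r ∈ Ioo 0 δ := Ioo_mem_nhdsGT hδ
    obtain ⟨r, hr1, hr2⟩ := (hy2'.and this).exists
    refine hr1.trans_le (measure_mono ?_)
    rw [Real.closedBall_eq_Icc]
    intro z hz
    exact ⟨by linarith [hz.1, hr2.2], by linarith [hz.2, hr2.2]⟩
  have h3 := hψ y hpos
  set S : Set ℝ := {δ | ν {y - δ} = 0} with hS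
  have hne : (nhdsWithin (0:ℝ) (Ioi 0) ⊓ 𝓟 S).NeBot := by
    rw [← frequently_mem_iff_neBot]
    intro hcon
    obtain ⟨e, he, hsub⟩ := (mem_nhdsGT_iff_exists_Ioo_subset).1 hcon
    have hc : (Ioo (0:ℝ) e).Countable := by
      have : ((fun δ => y - δ) ⁻¹' {y : ℝ | ν {y} ≠ 0}).Countable :=
        (atoms_countable ν).preimage (fun a b h => by simpa using h)
      refine this.mono fun δ hδ => ?_
      exact hsub hδ
    have := hc.measure_zero volume
    rw [Real.volume_Ioo, ENNReal.ofReal_eq_zero] at this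
    have he' : (0:ℝ) < e := he
    linarith
  have h4 := hy1'.mono_left (inf_le_left : nhdsWithin (0:ℝ) (Ioi 0) ⊓ 𝓟 S ≤ _)
  have h5 := h3.mono_left (inf_le_left : nhdsWithin (0:ℝ) (Ioi 0) ⊓ 𝓟 S ≤ _)
  refine tendsto_nhds_unique h5 (h4.congr' ?_)
  have : ∀ᶠ δ in nhdsWithin (0:ℝ) (Ioi 0) ⊓ 𝓟 S, δ ∈ S := mem_inf_of_right (mem_principal_self S)
  have hp : ∀ᶠ δ in nhdsWithin (0:ℝ) (Ioi 0) ⊓ 𝓟 S, δ ∈ Ioi (0:ℝ) :=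
    mem_inf_of_left self_mem_nhdsWithin
  filter_upwards [this, hp] with δ hδ hδ0
  have hδ0' : 0 < δ := hδ0
  have hae : Icc (y - δ) (y + δ) =ᵐ[ν] Ioc (y - δ) (y + δ) := by
    exact (Ioc_ae_eq_Icc' hδ).symm
  simp only [Function.comp_apply]
  rw [Real.closedBall_eq_Icc, setAverage_eq, setIntegral_congr_set hae, measureReal_congr hae,
    smul_eq_mul, div_eq_inv_mul]

lemma two_sign_bdd {f : ℝ → ℝ} {s : Set ℝ} {p n : ℝ} (hp : 0 < p) (hn : n < 0)
    (h1 : ∀ x ∈ s, 0 ≤ 1 + f x * p) (h2 : ∀ x ∈ s, 0 ≤ 1 + f x * n) :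
    ∃ B > 0, ∀ x ∈ s, |f x| ≤ B := by
  refine ⟨1 / p + 1 / (-n), by have : 0 < -n := by linarith
                               positivity, fun x hx => ?_⟩
  have hn' : 0 < -n := by linarith
  have e1 : -(1 / p) ≤ f x := by
    rw [neg_le, div_eq_mul_inv, one_mul, ← mul_le_mul_iff_left₀ hp, inv_mul_cancel₀ hp.ne']
    linarith [h1 x hx]
  have e2 : f x ≤ 1 / (-n) := by
    rw [le_div_iff₀ hn']
    linarith [h2 x hx]
  have : 0 < 1 / p := by positivity
  have : 0 < 1 / (-n) := by positivity
  rw [abs_le]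
  constructor <;> linarith

lemma exists_neg_of_int {μ : Measure ℝ} {φ : ℝ → ℝ} (hi : Integrable φ μ)
    (h0 : ∫ x, φ x ∂μ = 0) {s : Set ℝ} (hs : ∀ᵐ x ∂μ, x ∈ s) (hne : ¬ (φ =ᵐ[μ] 0)) :
    ∃ x ∈ s, φ x < 0 := by
  by_contra! hcon
  apply hne
  refine (integral_eq_zero_iff_of_nonneg_ae ?_ hi).1 h0
  filter_upwards [hs] with x hx using hcon x hx

lemma sar_bdd (μ ν : Measure ℝ) [IsProbabilityMeasure μ] [IsProbabilityMeasure ν]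
    (hν : ∀ᵐ y ∂ν, 0 ≤ y) (hμ : ∀ x, 0 < μ (Ioi x)) (φ₁ φ₂ : ℝ → ℝ) (θ d₁ : ℝ) (hd₁ : 0 < d₁)
    (hφ₁ : Tendsto φ₁ atTop (nhds d₁)) (hi1 : Integrable φ₁ μ) (hi2 : Integrable φ₂ ν)
    (h1 : ∫ x, φ₁ x ∂μ = 0) (h2 : ∫ x, φ₂ x ∂ν = 0)
    (hnn : ∀ x y : ℝ, 0 ≤ y → 0 ≤ 1 + θ * φ₁ x * φ₂ y) :
    ∃ B > 0, (∀ y ≥ 0, |θ * φ₂ y| ≤ B) ∧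
      ∃ M > 0, ∀ᵐ p ∂(μ.prod ν), 1 + θ * φ₁ p.1 * φ₂ p.2 ≤ M := by
  obtain ⟨N, hN⟩ := eventually_atTop.1 (hφ₁.eventually (lt_mem_nhds hd₁))
  have hne1 : ¬ (φ₁ =ᵐ[μ] 0) := by
    intro h
    have h3 : ∀ᵐ x ∂μ, x ∉ Ioi N := by
      filter_upwards [h] with x hx hxN
      have := hN x (le_of_lt hxN)
      rw [hx] at this
      exact lt_irrefl _ this
    have := measure_eq_zero_iff_ae_notMem.2 h3
    exact (hμ N).ne' this
  obtain ⟨xn, -, hxn⟩ := exists_neg_of_int hi1 h1 (s := univ) (by simp) hne1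
  have hxp := hN N le_rfl
  obtain ⟨B, hB, hBB⟩ := two_sign_bdd (f := fun y => θ * φ₂ y) (s := Ici 0) hxp hxn
    (fun y hy => by have := hnn N y hy; linarith) (fun y hy => by have := hnn xn y hy; linarith)
  refine ⟨B, hB, hBB, ?_⟩
  have hq1 : Measure.QuasiMeasurePreserving (Prod.snd : ℝ × ℝ → ℝ) (μ.prod ν) ν :=
    Measure.quasiMeasurePreserving_snd
  by_cases hz : φ₂ =ᵐ[ν] 0
  · refine ⟨1, one_pos, ?_⟩
    filter_upwards [hq1.ae hz] with p hp
    rw [hp]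
    simp
  · obtain ⟨yn, hyn0, hyn⟩ := exists_neg_of_int hi2 h2 (s := Ici 0) hν hz
    obtain ⟨yp, hyp0, hyp⟩ := exists_neg_of_int (φ := fun y => - φ₂ y) hi2.neg
      (by rw [integral_neg, h2, neg_zero]) (s := Ici 0) hν (fun h => hz (by
        filter_upwards [h] with y hy
        simpa using hy))
    obtain ⟨B', hB', hBB'⟩ := two_sign_bdd (f := fun x => θ * φ₁ x) (s := univ)
      (p := φ₂ yp) (n := φ₂ yn) (by linarith) hyn (fun x _ => hnn x yp hyp0)
      (fun x _ => hnn x yn hyn0)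
    rcases eq_or_ne θ 0 with h0 | h0
    · exact ⟨1, one_pos, by simp [h0]⟩
    · have hθ : 0 < |θ| := abs_pos.2 h0
      refine ⟨1 + B' * (B / |θ|), by positivity, ?_⟩
      filter_upwards [hq1.ae hν] with p hp
      have e1 := hBB' p.1 (mem_univ _)
      have e2 := hBB p.2 hp
      have e3 : |φ₂ p.2| ≤ B / |θ| := by
        rw [le_div_iff₀ hθ, mul_comm, ← abs_mul]; exact e2
      have : |θ * φ₁ p.1 * φ₂ p.2| ≤ B' * (B / |θ|) := by
        rw [abs_mul]
        gcongr
      linarith [le_abs_self (θ * φ₁ p.1 * φ₂ p.2)]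

lemma wd_le {α : Type*} [MeasurableSpace α] (m : Measure α) [SFinite m] {f g : α → ENNReal}
    {C : ENNReal} (hC : C ≠ ⊤) {s : Set α} (hs : MeasurableSet s)
    (h : ∀ᵐ p ∂m, p ∈ s → f p ≤ C * g p) :
    m.withDensity f s ≤ C * m.withDensity g s := by
  rw [withDensity_apply _ hs, withDensity_apply _ hs, ← lintegral_const_mul' _ _ hC]
  apply lintegral_mono_ae
  rw [ae_restrict_iff' hs]
  exact h

lemma LLc_of_equiv (l H : Measure ℝ) [IsProbabilityMeasure l] [IsProbabilityMeasure H] {γ : ℝ}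
    (hH : LLc H γ)
    (hTE : ∀ δ > 0, δ ≤ 1 → ∀ᶠ x in atTop, H (Ioi x) ≤ ENNReal.ofReal (1 + δ) * l (Ioi x) ∧
      l (Ioi x) ≤ ENNReal.ofReal (1 + δ) * H (Ioi x)) : LLc l γ := by
  have hpos : ∀ x, 0 < l (Ioi x) := by
    intro x
    obtain ⟨x', hx', hxx⟩ := ((hTE 1 one_pos le_rfl).and (eventually_ge_atTop x)).exists
    have : 0 < l (Ioi x') := by
      rw [pos_iff_ne_zero]
      intro h0
      have := hx'.1
      rw [h0, mul_zero] at this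
      exact (hH.1 x').ne' (le_antisymm this zero_le)
    exact this.trans_le (measure_mono (Ioi_subset_Ioi hxx))
  have hp : ∀ x, 0 < l.real (Ioi x) := fun x =>
    ENNReal.toReal_pos (hpos x).ne' (measure_ne_top _ _)
  have hq : ∀ x, 0 < H.real (Ioi x) := hH.real_pos
  have hr : Tendsto (fun x => l.real (Ioi x) / H.real (Ioi x)) atTop (nhds 1) := by
    rw [Metric.tendsto_nhds]
    intro ε hε
    have hδ : 0 < min 1 (ε / 2) := by positivity
    filter_upwards [hTE (min 1 (ε / 2)) hδ (min_le_left _ _)] with x hx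
    obtain ⟨h1, h2⟩ := hx
    set δ := min 1 (ε / 2) with hδdef
    have hδε : δ ≤ ε / 2 := min_le_right _ _
    rw [← real_le_iff _ _ _ _ (by positivity)] at h1 h2
    have a := hp x
    have b := hq x
    have e2 : l.real (Ioi x) / H.real (Ioi x) ≤ 1 + δ := by rwa [div_le_iff₀ b]
    have e1 : 1 ≤ (1 + δ) * (l.real (Ioi x) / H.real (Ioi x)) := by
      rw [← mul_div_assoc, le_div_iff₀ b]; linarith
    set r := l.real (Ioi x) / H.real (Ioi x)
    rw [Real.dist_eq, abs_lt]
    constructor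
    · have hr0 : 1 - δ ≤ r := by
        by_contra hcon
        push Not at hcon
        nlinarith
      linarith
    · linarith
  refine ⟨hpos, fun t ht => ?_⟩
  have h1 : Tendsto (fun x : ℝ => l.real (Ioi (x - t)) / H.real (Ioi (x - t))) atTop (nhds 1) :=
    hr.comp (tendsto_atTop_add_const_right atTop (-t) tendsto_id)
  have h2 := (h1.mul (hH.2 t ht)).mul (hr.inv₀ one_ne_zero)
  simp only [one_mul, inv_one, mul_one] at h2
  refine h2.congr fun x => ?_
  have := (hp x).ne'
  have := (hq x).ne'
  have := (hq (x - t)).ne'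
  field_simp

lemma RSmall_of_le (l H : Measure ℝ) [IsProbabilityMeasure l] [IsProbabilityMeasure H]
    {K : ℝ} (hK : 0 < K) (hle : l ≤ ENNReal.ofReal K • H) (hR : RSmall H)
    (hT : ∀ᶠ x in atTop, H (Ioi x) ≤ ENNReal.ofReal 2 * l (Ioi x)) : RSmall l := by
  intro ε hε
  obtain ⟨A, hA⟩ := hR (ε / (K * K * 2)) (by positivity)
  refine ⟨A, ?_⟩
  filter_upwards [hA, hT] with x h1 h2
  have h3 : RRc l A x ≤ ENNReal.ofReal K * (ENNReal.ofReal K * RRc H A x) := by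
    have h4 : l.prod l ≤ ENNReal.ofReal K • ENNReal.ofReal K • (H.prod H) := by
      have := Measure.prod_mono hle hle
      rwa [Measure.prod_smul_left, Measure.prod_smul_right] at this
    exact h4 _
  refine h3.trans ?_
  calc _ ≤ ENNReal.ofReal K * (ENNReal.ofReal K * (ENNReal.ofReal (ε / (K * K * 2)) *
        (ENNReal.ofReal 2 * l (Ioi x)))) := by gcongr; exact h1.trans (by gcongr)
    _ = ENNReal.ofReal (K * (K * ((ε / (K * K * 2)) * 2))) * l (Ioi x) := by
        rw [ENNReal.ofReal_mul hK.le, ENNReal.ofReal_mul hK.le,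
          ENNReal.ofReal_mul (by positivity)]
        ring
    _ = _ := by
        congr 2
        field_simp

lemma exp_int (μ ν : Measure ℝ) [IsProbabilityMeasure μ] [IsProbabilityMeasure ν]
    (hν : ∀ᵐ y ∂ν, 0 ≤ y) {γ κ : ℝ} (hγ : 0 ≤ γ) (hκ : 0 ≤ κ)
    (hκ1 : ∀ᵐ y ∂ν, κ * y ≤ 1) (hi : Integrable (fun y => Real.exp (γ * y)) μ) :
    Integrable (fun z => Real.exp (γ * κ * z)) (HHc μ ν) := by
  unfold HHc
  rw [integrable_map_measure (by fun_prop) meas_mulc.aemeasurable]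
  have h1 : Integrable (fun p : ℝ × ℝ => 1 + Real.exp (γ * p.1)) (μ.prod ν) :=
    (integrable_const _).add (hi.comp_fst ν)
  refine h1.mono' (Measurable.aestronglyMeasurable (by fun_prop)) ?_
  have hq1 : Measure.QuasiMeasurePreserving (Prod.snd : ℝ × ℝ → ℝ) (μ.prod ν) ν :=
    Measure.quasiMeasurePreserving_snd
  filter_upwards [hq1.ae hν, hq1.ae hκ1] with p hp1 hp2
  simp only [Function.comp_apply]
  rw [Real.norm_of_nonneg (Real.exp_pos _).le]
  rcases le_total p.1 0 with h | h
  · have : Real.exp (γ * κ * (p.1 * p.2)) ≤ 1 := by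
      apply Real.exp_le_one_iff.2
      have : p.1 * p.2 ≤ 0 := mul_nonpos_of_nonpos_of_nonneg h hp1
      exact mul_nonpos_of_nonneg_of_nonpos (by positivity) this
    have := Real.exp_pos (γ * p.1)
    linarith
  · have : Real.exp (γ * κ * (p.1 * p.2)) ≤ Real.exp (γ * p.1) := by
      apply Real.exp_le_exp.2
      calc γ * κ * (p.1 * p.2) = γ * p.1 * (κ * p.2) := by ring
        _ ≤ γ * p.1 * 1 := by gcongr
        _ = _ := by ring
    linarith

theorem main_meas (μ ν : Measure ℝ) [IsProbabilityMeasure μ] [IsProbabilityMeasure ν]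
    (hν : ∀ᵐ y ∂ν, 0 ≤ y) (φ₁ φ₂ : ℝ → ℝ) (θ c d₁ γ κ : ℝ) (hc : 0 < c) (hd₁ : 0 < d₁)
    (hm1 : Measurable φ₁) (hm2 : Measurable φ₂)
    (hφ₁ : Tendsto φ₁ atTop (nhds d₁)) (hi1 : Integrable φ₁ μ) (hi2 : Integrable φ₂ ν)
    (h1 : ∫ x, φ₁ x ∂μ = 0) (h2 : ∫ x, φ₂ x ∂ν = 0)
    (hnn : ∀ x y : ℝ, 0 ≤ y → 0 ≤ 1 + θ * φ₁ x * φ₂ y)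
    (hcc : ∀ᵐ y ∂ν, c ≤ 1 + θ * d₁ * φ₂ y)
    (J : Measure (ℝ × ℝ)) (hJ : J = (μ.prod ν).withDensity
      (fun p => ENNReal.ofReal (1 + θ * φ₁ p.1 * φ₂ p.2)))
    (l : Measure ℝ) [IsProbabilityMeasure l] (hl : l = J.map (fun p => p.1 * p.2))
    (hA2 : A2c ν l) (hγ : 0 ≤ γ) (hκ : 0 ≤ κ) (hκ1 : ∀ᵐ y ∂ν, κ * y ≤ 1)
    (hκ2 : ∀ ε > 0, ∃ y0 > 0, 1 / y0 ≤ κ + ε ∧ 0 < ν (Ioi y0))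
    (hL : LLc μ γ) (hR : RSmall μ) (hexp : Integrable (fun y => Real.exp (γ * y)) μ) :
    LLc l (γ * κ) ∧ RSmall l ∧ Integrable (fun z => Real.exp (γ * κ * z)) l := by
  obtain ⟨B, hB, hBB, M, hM, hMM⟩ := sar_bdd μ ν hν hL.1 φ₁ φ₂ θ d₁ hd₁ hφ₁ hi1 hi2 h1 h2 hnn
  set h : ℝ → ℝ := fun y => 1 + θ * d₁ * φ₂ y with hh
  have hhm : Measurable h := by fun_prop
  set νs : Measure ℝ := ν.withDensity (fun y => ENNReal.ofReal (h y)) with hνs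
  have hprod : μ.prod νs = (μ.prod ν).withDensity (fun p => ENNReal.ofReal (h p.2)) :=
    prod_withDensity_right (by fun_prop)
  haveI : IsProbabilityMeasure νs := by
    constructor
    rw [hνs, withDensity_apply _ MeasurableSet.univ, Measure.restrict_univ,
      ← ofReal_integral_eq_lintegral_ofReal]
    · simp only [hh]
      rw [integral_add (integrable_const _) (hi2.const_mul _), integral_const_mul, h2]
      simp
    · exact (integrable_const _).add (hi2.const_mul _)
    · filter_upwards [hcc] with y hy
      exact hc.le.trans hy
  have hac : νs ≪ ν := withDensity_absolutelyContinuous _ _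
  have hνsn : ∀ᵐ y ∂νs, 0 ≤ y := hac.ae_le hν
  have hksA : ∀ᵐ y ∂νs, κ * y ≤ 1 := hac.ae_le hκ1
  have hνle : ∀ s, MeasurableSet s → ν s ≤ ENNReal.ofReal (1 / c) * νs s := by
    intro s hs
    have := wd_le ν (f := fun _ => 1) (g := fun y => ENNReal.ofReal (h y))
      (C := ENNReal.ofReal (1 / c)) ENNReal.ofReal_ne_top hs (by
        filter_upwards [hcc] with y hy _
        rw [← ENNReal.ofReal_mul (by positivity), ← ENNReal.ofReal_one]
        apply ENNReal.ofReal_le_ofReal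
        rw [one_div, ← div_eq_inv_mul, le_div_iff₀ hc, one_mul]
        exact hy)
    simpa using this
  set Ch : ℝ := 1 + d₁ * B with hCh
  have hChp : 0 < Ch := by positivity
  have hνsle : ∀ s, MeasurableSet s → νs s ≤ ENNReal.ofReal Ch * ν s := by
    intro s hs
    have := wd_le ν (g := fun _ => 1) (f := fun y => ENNReal.ofReal (h y))
      (C := ENNReal.ofReal Ch) ENNReal.ofReal_ne_top hs (by
        filter_upwards [hν] with y hy _
        rw [mul_one]
        apply ENNReal.ofReal_le_ofReal
        have e := (le_abs_self _).trans (hBB y hy)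
        simp only [hh, hCh]
        nlinarith)
    simpa using this
  have hksB : ∀ ε > 0, ∃ y0 > 0, 1 / y0 ≤ κ + ε ∧ 0 < νs (Ioi y0) := by
    intro ε hε
    obtain ⟨y0, a, b, e⟩ := hκ2 ε hε
    refine ⟨y0, a, b, ?_⟩
    rw [pos_iff_ne_zero]
    intro h0
    have := hνle _ (measurableSet_Ioi (a := y0))
    rw [h0, mul_zero] at this
    exact e.ne' (le_antisymm this zero_le)
  set H := HHc μ νs with hH
  have hHI : ∀ x, H (Ioi x) = (μ.prod νs) ((fun p => p.1 * p.2) ⁻¹' Ioi x) := fun x => by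
    rw [hH, HHc, Measure.map_apply meas_mulc measurableSet_Ioi]
  have hlI : ∀ x, l (Ioi x) = J ((fun p => p.1 * p.2) ⁻¹' Ioi x) := fun x => by
    rw [hl, Measure.map_apply meas_mulc measurableSet_Ioi]
  have hq1 : Measure.QuasiMeasurePreserving (Prod.snd : ℝ × ℝ → ℝ) (μ.prod ν) ν :=
    Measure.quasiMeasurePreserving_snd
  have hJle : J ≤ ENNReal.ofReal (M / c) • (μ.prod νs) := by
    apply Measure.le_iff.2
    intro s hs
    rw [hJ, hprod]
    refine wd_le _ ENNReal.ofReal_ne_top hs ?_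
    filter_upwards [hMM, hq1.ae hcc] with p hp1 hp2 _
    rw [← ENNReal.ofReal_mul (by positivity)]
    apply ENNReal.ofReal_le_ofReal
    refine hp1.trans ?_
    rw [div_mul_eq_mul_div, le_div_iff₀ hc]
    gcongr
  have hlle : l ≤ ENNReal.ofReal (M / c) • H := by
    rw [hl, hH, HHc, ← Measure.map_smul]
    exact Measure.map_mono hJle meas_mulc
  have hKp : 0 < M / c := by positivity
  have hslice : ∀ u0 > 0, ∀ x ≥ 0, ∀ m : Measure (ℝ × ℝ), m ≪ μ.prod ν →
      m ((fun p => p.1 * p.2) ⁻¹' Ioi x) ≤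
        m (((fun p => p.1 * p.2) ⁻¹' Ioi x) ∩ {p | u0 ≤ p.1}) + m (univ ×ˢ Ioi (x / u0)) := by
    intro u0 hu0 x hx m hm
    refine le_trans (measure_mono_ae ?_) (measure_union_le _ _)
    filter_upwards [hm.ae_le (hq1.ae hν)] with p hp
    intro hpx
    have hpx' : x < p.1 * p.2 := hpx
    by_cases hu : u0 ≤ p.1
    · exact Or.inl ⟨hpx, hu⟩
    · refine Or.inr ⟨mem_univ _, ?_⟩
      rw [mem_Ioi, div_lt_iff₀ hu0]
      push Not at hu
      nlinarith
  have hJac : J ≪ μ.prod ν := hJ ▸ withDensity_absolutelyContinuous _ _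
  have hPac : μ.prod νs ≪ μ.prod ν := hprod ▸ withDensity_absolutelyContinuous _ _
  have hmeasE : ∀ u0 x : ℝ, MeasurableSet
      (((fun p : ℝ × ℝ => p.1 * p.2) ⁻¹' Ioi x) ∩ {p | u0 ≤ p.1}) := fun u0 x =>
    (meas_mulc measurableSet_Ioi).inter (measurableSet_le measurable_const measurable_fst)
  have hA2' : ∀ z > 0, ∀ ε > 0, ∀ᶠ x in atTop,
      ν (Ioi (x / z)) ≤ ENNReal.ofReal ε * l (Ioi x) := by
    intro z hz ε hε
    have := hA2 (1 / z) (by positivity) ε hε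
    simpa [div_eq_inv_mul] using this
  have hTE : ∀ δ > 0, δ ≤ 1 → ∀ᶠ x in atTop, H (Ioi x) ≤ ENNReal.ofReal (1 + δ) * l (Ioi x) ∧
      l (Ioi x) ≤ ENNReal.ofReal (1 + δ) * H (Ioi x) := by
    intro δ hδ hδ1
    set ε := δ / 4 with hε
    have hεp : 0 < ε := by positivity
    set ε' := ε * c / (1 + ε) with hε'
    have hε'p : 0 < ε' := by positivity
    have hε'e : ε' * (1 + ε) = ε * c := by rw [hε']; field_simp
    have hev := Metric.tendsto_nhds.1 hφ₁ (ε' / B) (by positivity)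
    obtain ⟨u0, hu⟩ := eventually_atTop.1 (hev.and (eventually_gt_atTop 0))
    have hu0 : 0 < u0 := (hu u0 le_rfl).2
    have hkey : ∀ᵐ p ∂(μ.prod ν), u0 ≤ p.1 →
        |1 + θ * φ₁ p.1 * φ₂ p.2 - h p.2| ≤ ε' ∧ c ≤ h p.2 := by
      filter_upwards [hq1.ae hν, hq1.ae hcc] with p hp1 hp2 hp3
      refine ⟨?_, hp2⟩
      have e1 := (hu p.1 hp3).1
      rw [Real.dist_eq] at e1
      have e2 := hBB p.2 hp1
      have : 1 + θ * φ₁ p.1 * φ₂ p.2 - h p.2 = (θ * φ₂ p.2) * (φ₁ p.1 - d₁) := by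
        simp only [hh]; ring
      rw [this, abs_mul]
      calc _ ≤ B * (ε' / B) := by gcongr
        _ = ε' := by field_simp
    filter_upwards [hA2' u0 hu0 (ε / Ch) (by positivity), hA2' u0 hu0 (ε / M) (by positivity),
      eventually_ge_atTop 0] with x hx1 hx2 hx0
    have b1 : νs (Ioi (x / u0)) ≤ ENNReal.ofReal ε * l (Ioi x) := by
      refine (hνsle _ measurableSet_Ioi).trans ?_
      calc _ ≤ ENNReal.ofReal Ch * (ENNReal.ofReal (ε / Ch) * l (Ioi x)) := by gcongr
        _ = _ := by
          rw [← mul_assoc, ← ENNReal.ofReal_mul hChp.le, mul_div_cancel₀ _ hChp.ne']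
    have b2 : J (univ ×ˢ Ioi (x / u0)) ≤ ENNReal.ofReal ε * l (Ioi x) := by
      have : J (univ ×ˢ Ioi (x / u0)) ≤ ENNReal.ofReal M * ν (Ioi (x / u0)) := by
        have := wd_le (μ.prod ν) (f := fun p => ENNReal.ofReal (1 + θ * φ₁ p.1 * φ₂ p.2))
          (g := fun _ => 1) (C := ENNReal.ofReal M) ENNReal.ofReal_ne_top
          (MeasurableSet.univ.prod (measurableSet_Ioi (a := x / u0))) (by
            filter_upwards [hMM] with p hp _
            rw [mul_one]
            exact ENNReal.ofReal_le_ofReal hp)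
        rw [← hJ] at this
        simpa [Measure.prod_prod] using this
      refine this.trans ?_
      calc _ ≤ ENNReal.ofReal M * (ENNReal.ofReal (ε / M) * l (Ioi x)) := by gcongr
        _ = _ := by
          rw [← mul_assoc, ← ENNReal.ofReal_mul hM.le, mul_div_cancel₀ _ hM.ne']
    have c1 : (μ.prod νs) (((fun p => p.1 * p.2) ⁻¹' Ioi x) ∩ {p | u0 ≤ p.1}) ≤
        ENNReal.ofReal (1 + ε) * J (((fun p => p.1 * p.2) ⁻¹' Ioi x) ∩ {p | u0 ≤ p.1}) := by
      rw [hJ, hprod]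
      refine wd_le _ ENNReal.ofReal_ne_top (hmeasE u0 x) ?_
      filter_upwards [hkey] with p hp hpm
      obtain ⟨e1, e2⟩ := hp hpm.2
      rw [← ENNReal.ofReal_mul (by positivity)]
      apply ENNReal.ofReal_le_ofReal
      have := (abs_le.1 e1).1
      have e3 : ε * c ≤ ε * h p.2 := by gcongr
      nlinarith
    have c2 : J (((fun p => p.1 * p.2) ⁻¹' Ioi x) ∩ {p | u0 ≤ p.1}) ≤
        ENNReal.ofReal (1 + ε) *
          (μ.prod νs) (((fun p => p.1 * p.2) ⁻¹' Ioi x) ∩ {p | u0 ≤ p.1}) := by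
      rw [hJ, hprod]
      refine wd_le _ ENNReal.ofReal_ne_top (hmeasE u0 x) ?_
      filter_upwards [hkey] with p hp hpm
      obtain ⟨e1, e2⟩ := hp hpm.2
      rw [← ENNReal.ofReal_mul (by positivity)]
      apply ENNReal.ofReal_le_ofReal
      have := (abs_le.1 e1).2
      have e3 : ε * c ≤ ε * h p.2 := by gcongr
      nlinarith
    have t1 : H (Ioi x) ≤ ENNReal.ofReal (1 + ε) * l (Ioi x) + ENNReal.ofReal ε * l (Ioi x) := by
      rw [hHI]
      refine (hslice u0 hu0 x hx0 _ hPac).trans (add_le_add (c1.trans ?_) ?_)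
      · rw [hlI]
        gcongr
        exact inter_subset_left
      · rw [Measure.prod_prod, measure_univ, one_mul]
        exact b1
    have t2 : l (Ioi x) ≤ ENNReal.ofReal (1 + ε) * H (Ioi x) + ENNReal.ofReal ε * l (Ioi x) := by
      nth_rewrite 1 [hlI]
      refine (hslice u0 hu0 x hx0 _ hJac).trans (add_le_add (c2.trans ?_) b2)
      rw [hHI]
      gcongr
      exact inter_subset_left
    constructor
    · refine t1.trans ?_
      rw [← add_mul, ← ENNReal.ofReal_add (by positivity) hεp.le]
      have hle : (1 + ε) + ε ≤ 1 + δ := by rw [hε]; linarith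
      exact mul_le_mul' (ENNReal.ofReal_le_ofReal hle) le_rfl
    · rw [← real_le_iff _ _ _ _ (by positivity)]
      have t3 : l.real (Ioi x) ≤ (1 + ε) * H.real (Ioi x) + ε * l.real (Ioi x) := by
        have := ENNReal.toReal_mono (by
          refine ENNReal.add_ne_top.2 ⟨?_, ?_⟩ <;>
          exact ENNReal.mul_ne_top ENNReal.ofReal_ne_top (measure_ne_top _ _)) t2
        rw [ENNReal.toReal_add
          (ENNReal.mul_ne_top ENNReal.ofReal_ne_top (measure_ne_top _ _))
          (ENNReal.mul_ne_top ENNReal.ofReal_ne_top (measure_ne_top _ _)), ENNReal.toReal_mul,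
          ENNReal.toReal_mul, ENNReal.toReal_ofReal (by positivity),
          ENNReal.toReal_ofReal hεp.le] at this
        exact this
      have hHn : 0 ≤ H.real (Ioi x) := measureReal_nonneg
      have e4 : 1 + ε ≤ (1 - ε) * (1 + δ) := by rw [hε]; nlinarith
      have e5 : (1 - ε) * l.real (Ioi x) ≤ (1 - ε) * ((1 + δ) * H.real (Ioi x)) := by
        calc _ ≤ (1 + ε) * H.real (Ioi x) := by linarith
          _ ≤ ((1 - ε) * (1 + δ)) * H.real (Ioi x) := by gcongr
          _ = _ := by ring
      exact le_of_mul_le_mul_left e5 (by rw [hε]; linarith)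
  have hA2s : A2c νs H := by
    intro b hb ε hε
    filter_upwards [hA2 b hb (ε / (Ch * 2)) (by positivity), hTE 1 one_pos le_rfl] with x hx1 hx2
    refine (hνsle _ measurableSet_Ioi).trans ?_
    calc _ ≤ ENNReal.ofReal Ch * (ENNReal.ofReal (ε / (Ch * 2)) *
            (ENNReal.ofReal (1 + 1) * H (Ioi x))) := by
          gcongr
          refine hx1.trans ?_
          gcongr
          exact hx2.2
      _ = ENNReal.ofReal (Ch * ((ε / (Ch * 2)) * (1 + 1))) * H (Ioi x) := by
          rw [ENNReal.ofReal_mul hChp.le, ENNReal.ofReal_mul (by positivity)]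
          ring
      _ = _ := by
          congr 2
          field_simp
          norm_num
  have hHL : LLc H (γ * κ) := HHc_L μ νs hνsn hγ hκ hL hksA hksB hA2s
  have hHR : RSmall H := HHc_RSmall μ νs hνsn hL hR hA2s
  refine ⟨LLc_of_equiv l H hHL hTE, RSmall_of_le l H hKp hlle hHR ?_, ?_⟩
  · filter_upwards [hTE 1 one_pos le_rfl] with x hx
    have := hx.1
    norm_num at this ⊢
    exact this
  · exact ((exp_int μ νs hνsn hγ hκ hksA hexp).smul_measure ENNReal.ofReal_ne_top).mono_measure hlle

lemma equiv_ratio {f g : ℝ → ℝ} {a : ℝ} (ha : 0 < a) (hg : ∀ x, 0 < g x) :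
    (f ~[atTop] fun x => a * g x) ↔ Tendsto (fun x => f x / g x) atTop (nhds a) := by
  rw [isEquivalent_iff_tendsto_one (Eventually.of_forall fun x => (mul_pos ha (hg x)).ne')]
  constructor
  · intro h
    have := h.const_mul a
    rw [mul_one] at this
    refine this.congr fun x => ?_
    have := (hg x).ne'
    simp only [Pi.div_apply]
    field_simp
  · intro h
    have := h.div_const a
    rw [div_self ha.ne'] at this
    refine this.congr fun x => ?_
    have := (hg x).ne'
    simp only [Pi.div_apply]
    field_simp

section Bridge

variable {Ω : Type*} [MeasureSpace Ω]

lemma rvTail_eq {Z : Ω → ℝ} (hZ : Measurable Z) (x : ℝ) :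
    rvTail Z x = (Measure.map Z ℙ).real (Ioi x) := by
  rw [rvTail, measureReal_def, Measure.map_apply hZ measurableSet_Ioi]
  rfl

lemma rvCdf_eq {Z : Ω → ℝ} (hZ : Measurable Z) (x : ℝ) :
    rvCdf Z x = (Measure.map Z ℙ).real (Iic x) := by
  rw [rvCdf, measureReal_def, Measure.map_apply hZ measurableSet_Iic]
  rfl

lemma convSqTail_eq (Z : Ω → ℝ) (x : ℝ) :
    convSqTail Z x = ((Measure.map Z ℙ).prod (Measure.map Z ℙ)).real {p | x < p.1 + p.2} := by
  rw [convSqTail, Measure.conv, measureReal_def,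
    Measure.map_apply (by fun_prop) measurableSet_Ioi]
  rfl

variable [IsProbabilityMeasure (ℙ : Measure Ω)]

lemma memL_iff {Z : Ω → ℝ} (hZ : Measurable Z) (γ : ℝ) :
    MemLGamma Z γ ↔ LLc (Measure.map Z ℙ) γ := by
  have : IsProbabilityMeasure (Measure.map Z ℙ) := Measure.isProbabilityMeasure_map hZ.aemeasurable
  have key : UnboundedDist Z ↔ ∀ x, 0 < (Measure.map Z ℙ) (Ioi x) := by
    constructor
    · intro h x
      have h1 := h (max x 1) (by positivity)
      rw [rvTail_eq hZ, measureReal_def] at h1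
      have h2 := (ENNReal.toReal_pos_iff.1 h1).1
      exact h2.trans_le (measure_mono (Ioi_subset_Ioi (le_max_left _ _)))
    · intro h x _
      rw [rvTail_eq hZ, measureReal_def]
      exact ENNReal.toReal_pos (h x).ne' (measure_ne_top _ _)
  unfold MemLGamma LLc
  rw [key]
  refine and_congr_right fun hp => forall₂_congr fun t _ => ?_
  have hp' : ∀ x, 0 < rvTail Z x := fun x => by
    rw [rvTail_eq hZ, measureReal_def]
    exact ENNReal.toReal_pos (hp x).ne' (measure_ne_top _ _)
  rw [equiv_ratio (Real.exp_pos _) hp']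
  simp only [rvTail_eq hZ]

lemma memS_iff {Z : Ω → ℝ} (hZ : Measurable Z) (γ : ℝ) :
    MemSGamma Z γ ↔ LLc (Measure.map Z ℙ) γ ∧
      Integrable (fun y => Real.exp (γ * y)) (Measure.map Z ℙ) ∧
      Tendsto (fun x => ((Measure.map Z ℙ).prod (Measure.map Z ℙ)).real {p | x < p.1 + p.2} /
        (Measure.map Z ℙ).real (Ioi x)) atTop
        (nhds (2 * ∫ y, Real.exp (γ * y) ∂(Measure.map Z ℙ))) := by
  have : IsProbabilityMeasure (Measure.map Z ℙ) := Measure.isProbabilityMeasure_map hZ.aemeasurable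
  unfold MemSGamma
  rw [memL_iff hZ]
  refine and_congr_right fun hL => and_congr_right fun hi => ?_
  have hp' : ∀ x, 0 < rvTail Z x := fun x => by
    rw [rvTail_eq hZ, measureReal_def]
    exact ENNReal.toReal_pos (hL.1 x).ne' (measure_ne_top _ _)
  have hpos : 0 < ∫ y, Real.exp (γ * y) ∂(Measure.map Z ℙ) := integral_exp_pos hi
  rw [equiv_ratio (by positivity) hp']
  simp only [rvTail_eq hZ, convSqTail_eq]

lemma A2_bridge {X Y : Ω → ℝ} (hX : Measurable X) (hY : Measurable Y) (h : Assumption2 X Y) :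
    A2c (Measure.map Y ℙ) (Measure.map (fun ω => X ω * Y ω) ℙ) := by
  have hXY : Measurable (fun ω => X ω * Y ω) := hX.mul hY
  intro b hb ε hε
  filter_upwards [(h b hb).bound hε] with x hx
  rw [rvTail_eq hY, rvTail_eq hXY, Real.norm_of_nonneg measureReal_nonneg,
    Real.norm_of_nonneg measureReal_nonneg, real_le_iff _ _ _ _ hε.le] at hx
  exact hx

lemma hcc_bridge {Y : Ω → ℝ} (hY : Measurable Y) {φ₂ ψ : ℝ → ℝ} {θ c d₁ : ℝ}
    (hi : Integrable φ₂ (Measure.map Y ℙ)) (hψm : Measurable ψ) (hψ : SarmanovPsi Y φ₂ ψ)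
    (has : ℙ {ω | c ≤ 1 + θ * d₁ * ψ (Y ω)} = 1) :
    ∀ᵐ y ∂(Measure.map Y ℙ), c ≤ 1 + θ * d₁ * φ₂ y := by
  have : IsProbabilityMeasure (Measure.map Y ℙ) := Measure.isProbabilityMeasure_map hY.aemeasurable
  have h1 : ∀ᵐ y ∂(Measure.map Y ℙ), ψ y = φ₂ y := by
    refine psi_ae _ φ₂ ψ hi fun y hy => ?_
    have hs : y ∈ distSupport Y := fun δ hδ => by
      have := hy δ hδ
      rwa [Measure.map_apply hY measurableSet_Ioo] at this
    refine (hψ y hs).congr' ?_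
    filter_upwards [self_mem_nhdsWithin] with δ hδ
    have hδ' : (0 : ℝ) < δ := hδ
    have hd : Ioc (y - δ) (y + δ) = Iic (y + δ) \ Iic (y - δ) := by
      ext z
      simp only [mem_Ioc, mem_diff, mem_Iic, not_le]
      exact and_comm
    rw [rvCdf_eq hY, rvCdf_eq hY, hd, measureReal_diff (Iic_subset_Iic.2 (by linarith)) measurableSet_Iic]
  have hms : MeasurableSet {y : ℝ | c ≤ 1 + θ * d₁ * ψ y} :=
    measurableSet_le measurable_const (by fun_prop)
  have h2 : ∀ᵐ y ∂(Measure.map Y ℙ), c ≤ 1 + θ * d₁ * ψ y := by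
    rw [ae_map_iff hY.aemeasurable hms]
    exact (prob_compl_eq_zero_iff (hY hms)).2 has
  filter_upwards [h1, h2] with y e1 e2
  rwa [e1] at e2

lemma kappa_exists {Y : Ω → ℝ} (hY : Measurable Y) (hY0 : ∀ ω, 0 ≤ Y ω)
    (hYnd : ℙ {ω | Y ω = 0} ≠ 1) (γ : ℝ) :
    ∃ κ : ℝ, 0 ≤ κ ∧ gammaOverBeta Y γ = γ * κ ∧ (∀ᵐ y ∂(Measure.map Y ℙ), κ * y ≤ 1) ∧
      ∀ ε > 0, ∃ y0 > 0, 1 / y0 ≤ κ + ε ∧ 0 < (Measure.map Y ℙ) (Ioi y0) := by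
  have : IsProbabilityMeasure (Measure.map Y ℙ) := Measure.isProbabilityMeasure_map hY.aemeasurable
  have hS : ∀ y, 0 < rvTail Y y ↔ 0 < (Measure.map Y ℙ) (Ioi y) := fun y => by
    rw [rvTail_eq hY, measureReal_def, ENNReal.toReal_pos_iff]
    exact and_iff_left (measure_lt_top _ _)
  have h0 : 0 < (Measure.map Y ℙ) (Ioi 0) := by
    rw [pos_iff_ne_zero]
    intro h
    apply hYnd
    rw [Measure.map_apply hY measurableSet_Ioi] at h
    refine (prob_compl_eq_zero_iff (hY (measurableSet_singleton 0))).1 ?_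
    refine measure_mono_null (fun ω hω => ?_) h
    exact lt_of_le_of_ne (hY0 ω) (Ne.symm hω)
  obtain ⟨y1, hy1, hp1⟩ := exists_gt_pos _ h0
  have hanti : ∀ a b, a ≤ b → 0 < (Measure.map Y ℙ) (Ioi b) → 0 < (Measure.map Y ℙ) (Ioi a) :=
    fun a b hab h => h.trans_le (measure_mono (Ioi_subset_Ioi hab))
  unfold gammaOverBeta
  by_cases hB : BddAbove {y : ℝ | 0 < rvTail Y y}
  · rw [if_pos hB]
    set β := sSup {y : ℝ | 0 < rvTail Y y} with hβ
    have hβ1 : y1 ≤ β := le_csSup hB ((hS y1).2 hp1)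
    have hβ0 : 0 < β := lt_of_lt_of_le hy1 hβ1
    refine ⟨1 / β, by positivity, by ring, ?_, fun ε hε => ?_⟩
    · have hz : (Measure.map Y ℙ) (Ioi β) = 0 := by
        by_contra hne
        obtain ⟨y2, hy2, hp2⟩ := exists_gt_pos _ (pos_iff_ne_zero.2 hne)
        exact absurd (le_csSup hB ((hS y2).2 hp2)) (not_le.2 hy2)
      have : ∀ᵐ y ∂(Measure.map Y ℙ), y ∉ Ioi β := measure_eq_zero_iff_ae_notMem.1 hz
      filter_upwards [this] with y hy
      have hy' : y ≤ β := not_lt.1 hy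
      rw [one_div, inv_mul_le_iff₀ hβ0, mul_one]
      exact hy'
    · have hlt : 1 / (1 / β + ε) < β := by
        rw [div_lt_iff₀ (by positivity)]
        have : β * (1 / β + ε) = 1 + β * ε := by field_simp
        rw [this]
        have := mul_pos hβ0 hε
        linarith
      obtain ⟨y2, hy2, hlt2⟩ := exists_lt_of_lt_csSup ⟨y1, (hS y1).2 hp1⟩ hlt
      refine ⟨1 / (1 / β + ε), by positivity, by rw [one_div_one_div], ?_⟩
      exact hanti _ _ hlt2.le ((hS y2).1 hy2)
  · rw [if_neg hB]
    refine ⟨0, le_rfl, by ring, by simp, fun ε hε => ?_⟩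
    refine ⟨1 / ε, by positivity, by rw [one_div_one_div]; linarith, ?_⟩
    rw [not_bddAbove_iff] at hB
    obtain ⟨y2, hy2, hlt2⟩ := hB (1 / ε)
    exact hanti _ _ hlt2.le ((hS y2).1 hy2)

end Bridge

theorem product_memS_of_sarmanov {Ω : Type*} [MeasureSpace Ω] [IsProbabilityMeasure (ℙ : Measure Ω)]
    (X Y : Ω → ℝ) (hXm : Measurable X) (hYm : Measurable Y)
    (hYnonneg : ∀ ω, 0 ≤ Y ω)
    (hFunb : UnboundedDist X)
    (hXnd : ℙ {ω | X ω = 0} ≠ 1) (hYnd : ℙ {ω | Y ω = 0} ≠ 1)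
    (φ₁ φ₂ ψ : ℝ → ℝ) (θ c d₁ : ℝ)
    (hSar : Sarmanov X Y φ₁ φ₂ θ)
    (hc : 0 < c) (hd₁ : 0 < d₁) (hψm : Measurable ψ)
    (hψ : SarmanovPsi Y φ₂ ψ)
    (hφ₁ : Filter.Tendsto φ₁ atTop (nhds d₁))
    (has : ℙ {ω | c ≤ 1 + θ * d₁ * ψ (Y ω)} = 1)
    (hA2 : Assumption2 X Y)
    (γ : ℝ) (hγ : 0 ≤ γ) (hFS : MemSGamma X γ) :
    MemSGamma (fun ω => X ω * Y ω) (gammaOverBeta Y γ) := by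
  obtain ⟨hm1, hm2, hi1, hi2, hE1, hE2, hnn, hJ⟩ := hSar
  have : IsProbabilityMeasure (Measure.map X ℙ) := Measure.isProbabilityMeasure_map hXm.aemeasurable
  have : IsProbabilityMeasure (Measure.map Y ℙ) := Measure.isProbabilityMeasure_map hYm.aemeasurable
  have hXY : Measurable (fun ω => X ω * Y ω) := hXm.mul hYm
  have : IsProbabilityMeasure (Measure.map (fun ω => X ω * Y ω) ℙ) :=
    Measure.isProbabilityMeasure_map hXY.aemeasurable
  obtain ⟨κ, hκ, hκe, hκ1, hκ2⟩ := kappa_exists hYm hYnonneg hYnd γ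
  obtain ⟨hL, hexp, hconv⟩ := (memS_iff hXm γ).1 hFS
  have hR := Rsmall_of_conv hγ hL hexp hconv
  have hi1' : Integrable φ₁ (Measure.map X ℙ) :=
    (integrable_map_measure hm1.aestronglyMeasurable hXm.aemeasurable).2 hi1
  have hi2' : Integrable φ₂ (Measure.map Y ℙ) :=
    (integrable_map_measure hm2.aestronglyMeasurable hYm.aemeasurable).2 hi2
  have hE1' : ∫ x, φ₁ x ∂(Measure.map X ℙ) = 0 := by
    rw [integral_map hXm.aemeasurable hm1.aestronglyMeasurable]; exact hE1
  have hE2' : ∫ x, φ₂ x ∂(Measure.map Y ℙ) = 0 := by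
    rw [integral_map hYm.aemeasurable hm2.aestronglyMeasurable]; exact hE2
  have hν : ∀ᵐ y ∂(Measure.map Y ℙ), 0 ≤ y := by
    rw [ae_map_iff hYm.aemeasurable measurableSet_Ici]
    exact Eventually.of_forall hYnonneg
  have hcc := hcc_bridge hYm hi2' hψm hψ has
  have hl : Measure.map (fun ω => X ω * Y ω) ℙ =
      (Measure.map (fun ω => (X ω, Y ω)) ℙ).map (fun p : ℝ × ℝ => p.1 * p.2) := by
    rw [Measure.map_map (by fun_prop) (hXm.prodMk hYm)]
    rfl
  obtain ⟨r1, r2, r3⟩ := main_meas _ _ hν φ₁ φ₂ θ c d₁ γ κ hc hd₁ hm1 hm2 hφ₁ hi1' hi2' hE1' hE2'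
    hnn hcc _ hJ _ hl (A2_bridge hXm hYm hA2) hγ hκ hκ1 hκ2 hL hR hexp
  rw [hκe, memS_iff hXY]
  exact ⟨r1, r3, conv_of_Rsmall (mul_nonneg hγ hκ) r1 r3 r2⟩
end
end
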